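/- arXiv:0905.1099 — 3 statements merged into one kernel-verified Lean document; each statement's English description precedes it below -/
import Mathlib

section
/- In the AF2 type system, types are preserved by β-reduction: if Γ ⊢_AF2 t : A and t β-reduces to t′, then Γ ⊢_AF2 t′ : A. -/
/- Pure untyped λ-calculus with de Bruijn indices. -/

inductive Lam : Type
  | var : ℕ → Lam
  | app : Lam → Lam → Lam
  | abs : Lam → Lam
  deriving DecidableEq

namespace Lam

/-- Renaming of free variables. -/
def rename (ρ : ℕ → ℕ) : Lam → Lam
  | var i => var (ρ i)
  | app u v => app (u.rename ρ) (v.rename ρ)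
  | abs u => abs (u.rename (fun i => match i with | 0 => 0 | j+1 => ρ j + 1))

/-- Lifting of a simultaneous substitution under a binder. -/
def liftSub (σ : ℕ → Lam) : ℕ → Lam
  | 0 => var 0
  | i+1 => (σ i).rename (· + 1)

/-- Simultaneous (capture-avoiding) substitution of the free variables. -/
def subst (σ : ℕ → Lam) : Lam → Lam
  | var i => σ i
  | app u v => app (u.subst σ) (v.subst σ)
  | abs u => abs (u.subst (liftSub σ))

/-- `u.subst0 v` is `u[v/x]` for the first variable. -/
def subst0 (u v : Lam) : Lam :=
  u.subst (fun i => match i with | 0 => v | j+1 => var j)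

/-- One step of β-reduction (anywhere in the term). -/
inductive Beta : Lam → Lam → Prop
  | beta (u v : Lam) : Beta (app (abs u) v) (u.subst0 v)
  | appL {u u'} (v) : Beta u u' → Beta (app u v) (app u' v)
  | appR (u) {v v'} : Beta v v' → Beta (app u v) (app u v')
  | abs {u u'} : Beta u u' → Beta (abs u) (abs u')

/-- β-equivalence `≃β`. -/
def BetaEq : Lam → Lam → Prop := Relation.EqvGen Beta

/-- A term is normal if it has no β-redex. -/
def Normal (t : Lam) : Prop := ∀ u, ¬ Beta t u

def IsAbs : Lam → Prop
  | abs _ => True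
  | _ => False

/-- One step of head reduction: reduction of the head redex. -/
inductive HeadStep : Lam → Lam → Prop
  | beta (u v) : HeadStep (app (abs u) v) (u.subst0 v)
  | appL {u u'} (v) : ¬ u.IsAbs → HeadStep u u' → HeadStep (app u v) (app u' v)
  | abs {u u'} : HeadStep u u' → HeadStep (abs u) (abs u')

/-- `HeadRedN n u v` : `u` head-reduces to `v` in exactly `n` steps (`u ≻ v` with `n(u,v) = n`). -/
inductive HeadRedN : ℕ → Lam → Lam → Prop
  | refl (u) : HeadRedN 0 u u
  | step {n u v w} : HeadStep u v → HeadRedN n v w → HeadRedN (n+1) u w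

/-- `u ≻ v` : `v` is obtained from `u` by some head reductions. -/
def HeadRed (u v : Lam) : Prop := ∃ n, HeadRedN n u v

/-- Head normal form. -/
def HeadNF (t : Lam) : Prop := ∀ u, ¬ HeadStep t u

def ClosedUnder : ℕ → Lam → Prop
  | k, var i => i < k
  | k, app u v => ClosedUnder k u ∧ ClosedUnder k v
  | k, abs u => ClosedUnder (k+1) u

/-- Closed λ-term. -/
def Closed (t : Lam) : Prop := ClosedUnder 0 t

/-- `(f)ⁿx` : `iterApp f n x = (f)(f)…(f)x`. -/
def iterApp (f : Lam) : ℕ → Lam → Lam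
  | 0, x => x
  | n+1, x => app f (iterApp f n x)

/-- The Church integer `n̲ = λxλf(f)ⁿx`. -/
def church (n : ℕ) : Lam := abs (abs (iterApp (var 0) n (var 1)))

/-- `(t)w₁…wₖ`. -/
def appList (t : Lam) (ws : List Lam) : Lam := ws.foldl app t

/-- `T` is a storage operator for the closed normal term `t` :
there is `τ ≃β t` such that for every `θ ≃β t` there is a substitution `σ`
(not touching the fresh variable `f`, represented by the de Bruijn index `0`)
with `(T)θf ≻ (f)σ(τ)`. -/
def IsStorageFor (T t : Lam) : Prop :=
  Closed T ∧ ∃ τ, BetaEq τ t ∧ ∀ θ, BetaEq θ t →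
    ∃ σ : ℕ → Lam, σ 0 = var 0 ∧
      HeadRed (app (app T θ) (var 0)) (app (var 0) (τ.subst σ))

end Lam

/- Second order predicate logic : the types of the AF2 type system. -/

/-- A first order language: function symbols with arities, and predicate symbols. -/
structure Sig where
  Fn : Type
  arFn : Fn → ℕ
  Pr : Type

/-- First order terms over `S` (de Bruijn indices for first order variables). -/
inductive FOTerm (S : Sig) : Type
  | var : ℕ → FOTerm S
  | fn : (f : S.Fn) → (Fin (S.arFn f) → FOTerm S) → FOTerm S

namespace FOTerm

variable {S : Sig}

def rename (ρ : ℕ → ℕ) : FOTerm S → FOTerm S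
  | var i => var (ρ i)
  | fn f ts => fn f (fun i => (ts i).rename ρ)

def liftSub (σ : ℕ → FOTerm S) : ℕ → FOTerm S
  | 0 => var 0
  | i+1 => (σ i).rename (· + 1)

/-- Simultaneous substitution on first order terms. -/
def subst (σ : ℕ → FOTerm S) : FOTerm S → FOTerm S
  | var i => σ i
  | fn f ts => fn f (fun i => (ts i).subst σ)

end FOTerm

/-- Formulas of second order predicate logic over `S` : `⊥`, atomic formulas
`P(t₁,…,tₙ)` (predicate symbol) and `X(t₁,…,tₙ)` (predicate variable, de Bruijn),
implication, first order and second order universal quantification. -/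
inductive Form (S : Sig) : Type
  | bot : Form S
  | pr : S.Pr → List (FOTerm S) → Form S
  | pvar : ℕ → List (FOTerm S) → Form S
  | arr : Form S → Form S → Form S
  | fall : Form S → Form S
  | pall : Form S → Form S

namespace Form

variable {S : Sig}

/-- `¬A = A → ⊥`. -/
def neg (A : Form S) : Form S := arr A bot

/-- Substitution of first order terms for the first order variables of a formula. -/
def substFO (σ : ℕ → FOTerm S) : Form S → Form S
  | bot => bot
  | pr P ts => pr P (ts.map (FOTerm.subst σ))
  | pvar X ts => pvar X (ts.map (FOTerm.subst σ))
  | arr A B => arr (A.substFO σ) (B.substFO σ)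
  | fall A => fall (A.substFO (FOTerm.liftSub σ))
  | pall A => pall (A.substFO σ)

/-- `A[u/x]` for the first first-order variable. -/
def substFO0 (A : Form S) (u : FOTerm S) : Form S :=
  A.substFO (fun i => match i with | 0 => u | j+1 => FOTerm.var j)

/-- Lifting of the free first order variables (used for the rule (4)). -/
def shiftFO (A : Form S) : Form S := A.substFO (fun i => FOTerm.var (i+1))

/-- Renaming of the free predicate variables. -/
def rename2 (ρ : ℕ → ℕ) : Form S → Form S
  | bot => bot
  | pr P ts => pr P ts
  | pvar X ts => pvar (ρ X) ts
  | arr A B => arr (A.rename2 ρ) (B.rename2 ρ)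
  | fall A => fall (A.rename2 ρ)
  | pall A => pall (A.rename2 (fun i => match i with | 0 => 0 | j+1 => ρ j + 1))

/-- `inst2 G d e A` : substitution `A[G/X]` of the formula `G` (whose first order
variables `0,…,k-1` are the parameters of the predicate variable `X`) for the
predicate variable `X` of de Bruijn index `e`, where `d` first order binders have
been crossed. Each atomic subformula `X(t₁,…,tₖ)` is replaced by `G[t₁/x₁,…,tₖ/xₖ]`. -/
def inst2 (G : Form S) : ℕ → ℕ → Form S → Form S
  | _, _, bot => bot
  | _, _, pr P ts => pr P ts
  | d, e, pvar X ts =>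
      if X = e then
        (G.rename2 (· + e)).substFO (fun i =>
          if h : i < ts.length then ts.get ⟨i, h⟩ else FOTerm.var (i - ts.length + d))
      else pvar (if e < X then X - 1 else X) ts
  | d, e, arr A B => arr (inst2 G d e A) (inst2 G d e B)
  | d, e, fall A => fall (inst2 G (d+1) e A)
  | d, e, pall A => pall (inst2 G d (e+1) A)

/-- `A[G/X]` for the first predicate variable. -/
def inst2_0 (A G : Form S) : Form S := inst2 G 0 0 A

end Form

/-- Axioms of the equational theory: substitution instances of the equations of `E`. -/
def EqAx {S : Sig} (E : Set (FOTerm S × FOTerm S)) (u v : FOTerm S) : Prop :=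
  ∃ p ∈ E, ∃ σ : ℕ → FOTerm S, u = p.1.subst σ ∧ v = p.2.subst σ

/-- `u ≈ v` : the equivalence relation generated by the substitution instances
of the equations of `E`. -/
def EqE {S : Sig} (E : Set (FOTerm S × FOTerm S)) : FOTerm S → FOTerm S → Prop :=
  Relation.EqvGen (EqAx E)

/-- The AF2 type system: `AF2 S E Γ t A` means `Γ ⊢_{AF2} t : A`
with respect to the set of equations `E` (de Bruijn presentation: the rules
(4) and (6) of ∀-introduction lift the context, which implements the side
condition that the quantified variable does not occur free in `Γ`). -/
inductive AF2 (S : Sig) (E : Set (FOTerm S × FOTerm S)) :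
    List (Form S) → Lam → Form S → Prop
  | var {Γ : List (Form S)} {i : ℕ} {A : Form S} :
      Γ[i]? = some A → AF2 S E Γ (.var i) A
  | absI {Γ : List (Form S)} {A B : Form S} {t : Lam} :
      AF2 S E (A :: Γ) t B → AF2 S E Γ (.abs t) (.arr A B)
  | appE {Γ : List (Form S)} {A B : Form S} {u v : Lam} :
      AF2 S E Γ u (.arr A B) → AF2 S E Γ v A → AF2 S E Γ (.app u v) B
  | fallI {Γ : List (Form S)} {t : Lam} {A : Form S} :
      AF2 S E (Γ.map Form.shiftFO) t A → AF2 S E Γ t (.fall A)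
  | fallE {Γ : List (Form S)} {t : Lam} {A : Form S} (u : FOTerm S) :
      AF2 S E Γ t (.fall A) → AF2 S E Γ t (A.substFO0 u)
  | pallI {Γ : List (Form S)} {t : Lam} {A : Form S} :
      AF2 S E (Γ.map (Form.rename2 (· + 1))) t A → AF2 S E Γ t (.pall A)
  | pallE {Γ : List (Form S)} {t : Lam} {A : Form S} (G : Form S) :
      AF2 S E Γ t (.pall A) → AF2 S E Γ t (A.inst2_0 G)
  | eqE {Γ : List (Form S)} {t : Lam} {A : Form S} {u v : FOTerm S} :
      AF2 S E Γ t (A.substFO0 u) → EqE E u v → AF2 S E Γ t (A.substFO0 v)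

namespace SR

variable {S : Sig}

/-! ### First order terms -/

def sh (θ : ℕ → FOTerm S) : ℕ → FOTerm S := fun i => (θ i).rename (· + 1)

def consS (u : FOTerm S) (σ : ℕ → FOTerm S) : ℕ → FOTerm S
  | 0 => u
  | i+1 => σ i

def comp (σ τ : ℕ → FOTerm S) : ℕ → FOTerm S := fun i => (σ i).subst τ

def shN (n : ℕ) : ℕ → FOTerm S := fun i => FOTerm.var (i + n)

def lft (ρ : ℕ → ℕ) : ℕ → ℕ
  | 0 => 0
  | j+1 => ρ j + 1

theorem t_rename_eq (ρ : ℕ → ℕ) (t : FOTerm S) :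
    t.rename ρ = t.subst (fun i => FOTerm.var (ρ i)) := by
  induction t with
  | var i => rfl
  | fn f ts ih => simp only [FOTerm.rename, FOTerm.subst]; congr 1; funext i; exact ih i

theorem t_subst_subst (σ τ : ℕ → FOTerm S) (t : FOTerm S) :
    (t.subst σ).subst τ = t.subst (comp σ τ) := by
  induction t with
  | var i => rfl
  | fn f ts ih => simp only [FOTerm.subst]; congr 1; funext i; exact ih i

theorem t_subst_var (t : FOTerm S) : t.subst FOTerm.var = t := by
  induction t with
  | var i => rfl
  | fn f ts ih => simp only [FOTerm.subst]; congr 1; funext i; exact ih i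

theorem l_subst_var (ts : List (FOTerm S)) : ts.map (FOTerm.subst FOTerm.var) = ts := by
  have : (FOTerm.subst FOTerm.var : FOTerm S → FOTerm S) = id := by
    funext t; exact t_subst_var t
  rw [this, List.map_id]

theorem t_bound (t : FOTerm S) : ∃ N, ∀ σ τ : ℕ → FOTerm S,
    (∀ i < N, σ i = τ i) → t.subst σ = t.subst τ := by
  induction t with
  | var i => exact ⟨i + 1, fun σ τ h => h i (Nat.lt_succ_self i)⟩
  | fn f ts ih =>
    choose N hN using ih
    refine ⟨Finset.univ.sup N, fun σ τ h => ?_⟩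
    simp only [FOTerm.subst]; congr 1; funext i
    exact hN i σ τ (fun j hj => h j (lt_of_lt_of_le hj (Finset.le_sup (Finset.mem_univ i))))

theorem l_bound (ts : List (FOTerm S)) : ∃ N, ∀ σ τ : ℕ → FOTerm S,
    (∀ i < N, σ i = τ i) → ts.map (FOTerm.subst σ) = ts.map (FOTerm.subst τ) := by
  induction ts with
  | nil => exact ⟨0, fun _ _ _ => rfl⟩
  | cons t ts ih =>
    obtain ⟨N, hN⟩ := ih
    obtain ⟨M, hM⟩ := t_bound t
    refine ⟨max N M, fun σ τ h => ?_⟩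
    simp only [List.map_cons]
    rw [hM σ τ (fun i hi => h i (lt_of_lt_of_le hi (le_max_right _ _))),
      hN σ τ (fun i hi => h i (lt_of_lt_of_le hi (le_max_left _ _)))]

theorem liftSub_eq (σ : ℕ → FOTerm S) : FOTerm.liftSub σ = consS (FOTerm.var 0) (sh σ) := by
  funext i; cases i <;> rfl

theorem sh_eq (θ : ℕ → FOTerm S) : sh θ = comp θ (shN 1) := by
  funext i; exact t_rename_eq _ _

theorem comp_assoc (a b c : ℕ → FOTerm S) : comp (comp a b) c = comp a (comp b c) := by
  funext i; exact t_subst_subst _ _ _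

theorem comp_var (a : ℕ → FOTerm S) : comp a FOTerm.var = a := by
  funext i; exact t_subst_var _

theorem var_comp (a : ℕ → FOTerm S) : comp FOTerm.var a = a := rfl

theorem consS_comp (u : FOTerm S) (a b : ℕ → FOTerm S) :
    comp (consS u a) b = consS (u.subst b) (comp a b) := by
  funext i; cases i <;> rfl

theorem shN1_cons (u : FOTerm S) (a : ℕ → FOTerm S) : comp (shN 1) (consS u a) = a := rfl

theorem lift_comp (σ τ : ℕ → FOTerm S) :
    comp (FOTerm.liftSub σ) (FOTerm.liftSub τ) = FOTerm.liftSub (comp σ τ) := by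
  simp only [liftSub_eq, consS_comp, sh_eq, comp_assoc, shN1_cons]
  rfl

theorem lift_var : FOTerm.liftSub (FOTerm.var : ℕ → FOTerm S) = FOTerm.var := by
  funext i; cases i <;> rfl

/-! ### First order substitution in formulas -/

theorem f_subst_subst (A : Form S) : ∀ (σ τ : ℕ → FOTerm S),
    (A.substFO σ).substFO τ = A.substFO (comp σ τ) := by
  induction A with
  | bot => intros; rfl
  | pr P ts => intro σ τ; simp [Form.substFO, t_subst_subst]
  | pvar P ts => intro σ τ; simp [Form.substFO, t_subst_subst]
  | arr A B ihA ihB => intro σ τ; simp [Form.substFO, ihA, ihB]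
  | fall A ih => intro σ τ; simp [Form.substFO, ih, lift_comp]
  | pall A ih => intro σ τ; simp [Form.substFO, ih]

theorem f_subst_var (A : Form S) : A.substFO FOTerm.var = A := by
  induction A with
  | bot => rfl
  | pr P ts => simp [Form.substFO, l_subst_var]
  | pvar P ts => simp [Form.substFO, l_subst_var]
  | arr A B ihA ihB => simp [Form.substFO, ihA, ihB]
  | fall A ih => simp [Form.substFO, ih, lift_var]
  | pall A ih => simp [Form.substFO, ih]

theorem f_bound (A : Form S) : ∃ N, ∀ σ τ : ℕ → FOTerm S,
    (∀ i < N, σ i = τ i) → A.substFO σ = A.substFO τ := by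
  induction A with
  | bot => exact ⟨0, fun _ _ _ => rfl⟩
  | pr P ts =>
    obtain ⟨N, hN⟩ := l_bound ts
    exact ⟨N, fun σ τ h => by simp only [Form.substFO, hN σ τ h]⟩
  | pvar P ts =>
    obtain ⟨N, hN⟩ := l_bound ts
    exact ⟨N, fun σ τ h => by simp only [Form.substFO, hN σ τ h]⟩
  | arr A B ihA ihB =>
    obtain ⟨N, hN⟩ := ihA
    obtain ⟨M, hM⟩ := ihB
    refine ⟨max N M, fun σ τ h => ?_⟩
    simp only [Form.substFO]
    rw [hM σ τ (fun i hi => h i (lt_of_lt_of_le hi (le_max_right _ _))),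
      hN σ τ (fun i hi => h i (lt_of_lt_of_le hi (le_max_left _ _)))]
  | fall A ih =>
    obtain ⟨N, hN⟩ := ih
    refine ⟨N, fun σ τ h => ?_⟩
    simp only [Form.substFO]
    rw [hN (FOTerm.liftSub σ) (FOTerm.liftSub τ)]
    intro i hi
    cases i with
    | zero => rfl
    | succ i => simp only [FOTerm.liftSub]; rw [h i (by omega)]
  | pall A ih =>
    obtain ⟨N, hN⟩ := ih
    exact ⟨N, fun σ τ h => by simp only [Form.substFO, hN σ τ h]⟩

theorem substFO0_eq (A : Form S) (u : FOTerm S) :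
    A.substFO0 u = A.substFO (consS u FOTerm.var) := by
  unfold Form.substFO0; congr 1

theorem shiftFO_eq (A : Form S) : A.shiftFO = A.substFO (shN 1) := rfl

/-! ### Renaming of predicate variables -/

theorem rename2_pall (ρ : ℕ → ℕ) (A : Form S) :
    (Form.pall A).rename2 ρ = Form.pall (A.rename2 (lft ρ)) := by
  simp only [Form.rename2]; congr 2

theorem r_subst (A : Form S) : ∀ (ρ : ℕ → ℕ) (σ : ℕ → FOTerm S),
    (A.rename2 ρ).substFO σ = (A.substFO σ).rename2 ρ := by
  induction A with
  | bot => intros; rfl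
  | pr P ts => intros; rfl
  | pvar P ts => intros; rfl
  | arr A B ihA ihB => intro ρ σ; simp [Form.substFO, Form.rename2, ihA, ihB]
  | fall A ih => intro ρ σ; simp [Form.substFO, Form.rename2, ih]
  | pall A ih => intro ρ σ; simp [Form.substFO, rename2_pall, ih]

theorem r_r (A : Form S) : ∀ (ρ ρ' : ℕ → ℕ),
    (A.rename2 ρ).rename2 ρ' = A.rename2 (ρ' ∘ ρ) := by
  induction A with
  | bot => intros; rfl
  | pr P ts => intros; rfl
  | pvar P ts => intros; rfl
  | arr A B ihA ihB => intro ρ σ; simp [Form.rename2, ihA, ihB]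
  | fall A ih => intro ρ σ; simp [Form.rename2, ih]
  | pall A ih =>
    intro ρ σ; simp only [rename2_pall, ih]; congr 2; funext i; cases i <;> rfl

theorem r_id (A : Form S) : A.rename2 (fun i => i) = A := by
  induction A with
  | bot => rfl
  | pr P ts => rfl
  | pvar P ts => rfl
  | arr A B ihA ihB => simp [Form.rename2, ihA, ihB]
  | fall A ih => simp [Form.rename2, ih]
  | pall A ih =>
    rw [rename2_pall]
    have : lft (fun i => i) = (fun i => i) := by funext i; cases i <;> rfl
    rw [this, ih]

/-! ### Generalised second order instantiation -/

def ext (ts : List (FOTerm S)) (θ : ℕ → FOTerm S) : ℕ → FOTerm S := fun i =>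
  if h : i < ts.length then ts.get ⟨i, h⟩ else θ (i - ts.length)

def pd (e X : ℕ) : ℕ := if e < X then X - 1 else X

def inst (G : Form S) : (ℕ → FOTerm S) → ℕ → Form S → Form S
  | _, _, .bot => .bot
  | _, _, .pr P ts => .pr P ts
  | θ, e, .pvar X ts =>
      if X = e then (G.rename2 (· + e)).substFO (ext ts θ) else .pvar (pd e X) ts
  | θ, e, .arr A B => .arr (inst G θ e A) (inst G θ e B)
  | θ, e, .fall A => .fall (inst G (comp θ (shN 1)) e A)
  | θ, e, .pall A => .pall (inst G θ (e+1) A)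

theorem inst2_eq (G A : Form S) : ∀ d e, Form.inst2 G d e A = inst G (shN d) e A := by
  induction A with
  | bot => intros; rfl
  | pr P ts => intros; rfl
  | pvar P ts => intros; rfl
  | arr A B ihA ihB => intro d e; simp [Form.inst2, inst, ihA, ihB]
  | fall A ih => intro d e; simp only [Form.inst2, inst, ih]; rfl
  | pall A ih => intro d e; simp [Form.inst2, inst, ih]

theorem inst2_0_eq (A G : Form S) : A.inst2_0 G = inst G FOTerm.var 0 A := inst2_eq G A 0 0

theorem ext_comp (ts : List (FOTerm S)) (θ σ : ℕ → FOTerm S) :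
    comp (ext ts θ) σ = ext (ts.map (FOTerm.subst σ)) (comp θ σ) := by
  funext i
  by_cases h : i < ts.length <;> simp [comp, ext, h]

theorem inst_subst (G A : Form S) : ∀ θ e σ,
    (inst G θ e A).substFO σ = inst G (comp θ σ) e (A.substFO σ) := by
  induction A with
  | bot => intros; rfl
  | pr P ts => intros; rfl
  | pvar X ts =>
    intro θ e σ
    by_cases h : X = e
    · simp [inst, Form.substFO, h, f_subst_subst, ext_comp]
    · simp [inst, Form.substFO, h]
  | arr A B ihA ihB => intro θ e σ; simp [Form.substFO, inst, ihA, ihB]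
  | fall A ih =>
    intro θ e σ; simp only [Form.substFO, inst, ih]
    congr 2
    simp only [liftSub_eq, sh_eq, comp_assoc, shN1_cons]
  | pall A ih => intro θ e σ; simp [Form.substFO, inst, ih]

theorem inst_ext (G A : Form S) (N : ℕ)
    (hN : ∀ σ τ : ℕ → FOTerm S, (∀ i < N, σ i = τ i) → G.substFO σ = G.substFO τ) :
    ∀ (θ θ' : ℕ → FOTerm S) (e : ℕ), (∀ i < N, θ i = θ' i) → inst G θ e A = inst G θ' e A := by
  induction A with
  | bot => intros; rfl
  | pr P ts => intros; rfl
  | pvar X ts =>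
    intro θ θ' e h
    by_cases hX : X = e
    · simp only [inst, hX, if_true, r_subst]
      rw [hN (ext ts θ) (ext ts θ')]
      intro i hi
      simp only [ext]
      split
      · rfl
      · exact h _ (by omega)
    · simp [inst, hX]
  | arr A B ihA ihB => intro θ θ' e h; simp [inst, ihA θ θ' e h, ihB θ θ' e h]
  | fall A ih =>
    intro θ θ' e h; simp only [inst]
    rw [ih (comp θ (shN 1)) (comp θ' (shN 1)) e]
    intro i hi
    simp only [comp, h i hi]
  | pall A ih => intro θ θ' e h; simp [inst, ih θ θ' (e+1) h]

theorem inst_rename (G A : Form S) (r : ℕ → ℕ) : ∀ (θ : ℕ → FOTerm S) (e e' : ℕ) (ρ ρ' : ℕ → ℕ),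
    ρ e = e' → (∀ X, X ≠ e → ρ X ≠ e') → (∀ X, X ≠ e → pd e' (ρ X) = ρ' (pd e X)) →
    (∀ i, ρ' (i + e) = r i + e') →
    (inst G θ e A).rename2 ρ' = inst (G.rename2 r) θ e' (A.rename2 ρ) := by
  induction A with
  | bot => intros; rfl
  | pr P ts => intros; rfl
  | pvar X ts =>
    intro θ e e' ρ ρ' h1 h2 h3 h4
    by_cases hX : X = e
    · simp only [inst, Form.rename2, hX, if_true, h1, ← r_subst, r_r]
      congr 2
      funext i; exact h4 i
    · simp only [inst, Form.rename2, hX, if_false, h2 X hX, h3 X hX]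
  | arr A B ihA ihB =>
    intro θ e e' ρ ρ' h1 h2 h3 h4
    simp [inst, Form.rename2, ihA θ e e' ρ ρ' h1 h2 h3 h4, ihB θ e e' ρ ρ' h1 h2 h3 h4]
  | fall A ih =>
    intro θ e e' ρ ρ' h1 h2 h3 h4
    simp [inst, Form.rename2, ih _ e e' ρ ρ' h1 h2 h3 h4]
  | pall A ih =>
    intro θ e e' ρ ρ' h1 h2 h3 h4
    simp only [inst, rename2_pall]
    rw [ih θ (e+1) (e'+1) (lft ρ) (lft ρ')]
    · simp [lft, h1]
    · intro X hX
      cases X with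
      | zero => simp [lft]
      | succ X => simp only [lft]; have := h2 X (by omega); omega
    · intro X hX
      cases X with
      | zero => simp [lft, pd]
      | succ X =>
        have h5 := h3 X (by omega)
        have h6 := h2 X (by omega)
        have h7 : pd (e'+1) (ρ X + 1) = pd e' (ρ X) + 1 := by
          unfold pd; split <;> split <;> omega
        have h8 : pd (e+1) (X + 1) = pd e X + 1 := by
          unfold pd; split <;> split <;> omega
        simp only [lft]
        rw [h7, h8, h5]
    · intro i
      have := h4 i
      rw [← Nat.add_assoc]
      simp only [lft, this]; omega

theorem inst_cancel (H A : Form S) : ∀ (η : ℕ → FOTerm S) (n : ℕ) (ρ ρ' : ℕ → ℕ),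
    (∀ i, ρ i ≠ n) → (∀ i, pd n (ρ i) = ρ' i) →
    inst H η n (A.rename2 ρ) = A.rename2 ρ' := by
  induction A with
  | bot => intros; rfl
  | pr P ts => intros; rfl
  | pvar X ts =>
    intro η n ρ ρ' h1 h2
    simp [inst, Form.rename2, h1, h2]
  | arr A B ihA ihB =>
    intro η n ρ ρ' h1 h2
    simp [inst, Form.rename2, ihA η n ρ ρ' h1 h2, ihB η n ρ ρ' h1 h2]
  | fall A ih =>
    intro η n ρ ρ' h1 h2
    simp [inst, Form.rename2, ih _ n ρ ρ' h1 h2]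
  | pall A ih =>
    intro η n ρ ρ' h1 h2
    simp only [inst, rename2_pall]
    rw [ih η (n+1) (lft ρ) (lft ρ')]
    · intro i
      cases i with
      | zero => simp [lft]
      | succ i => simp only [lft]; have := h1 i; omega
    · intro i
      cases i with
      | zero => simp [lft, pd]
      | succ i =>
        have h3 := h2 i
        have h4 := h1 i
        simp only [lft]
        unfold pd at h3 ⊢; split at h3 <;> split <;> omega

def maxAr : Form S → ℕ
  | .bot => 0
  | .pr _ _ => 0
  | .pvar _ ts => ts.length
  | .arr A B => max (maxAr A) (maxAr B)
  | .fall A => maxAr A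
  | .pall A => maxAr A

/-- Commutation of two second order instantiations. -/
theorem inst_inst (G H A : Form S) (m bH e : ℕ) (z : ℕ → ℕ) (hz : ∀ j, m ≤ z j)
    (hH : ∀ σ τ : ℕ → FOTerm S, (∀ i < bH, σ i = τ i) → H.substFO σ = H.substFO τ) :
    ∀ (θ ζ η : ℕ → FOTerm S) (n : ℕ), maxAr A ≤ m →
    (∀ i < bH, η i = ζ i) → (∀ j k, k ≤ m → η (z j - k) = θ j) →
    inst G θ (e+n) (inst H ζ n A) =
      inst (inst G (fun j => FOTerm.var (z j)) e H) η n (inst G θ (e+n+1) A) := by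
  induction A with
  | bot => intros; rfl
  | pr P ts => intros; rfl
  | pvar X ts =>
    intro θ ζ η n hm h1 h2
    simp only [maxAr] at hm
    by_cases hX : X = n
    · subst hX
      have e1 : ¬ (X = e + X + 1) := by omega
      have e2 : pd (e + X + 1) X = X := by unfold pd; split <;> omega
      simp only [inst, if_true, e1, if_false, e2]
      rw [inst_rename G H (fun i => i) _ e (e+X) (· + X) (· + X) rfl
        (fun Y hY => by show Y + X ≠ e + X; omega)
        (fun Y hY => by unfold pd; split <;> split <;> omega) (fun i => by omega),
        r_id, inst_subst]
      have e3 : (H.rename2 (· + X)).substFO (ext ts ζ) = (H.rename2 (· + X)).substFO (ext ts η) := by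
        rw [r_subst, r_subst, hH (ext ts ζ) (ext ts η)]
        intro i hi
        simp only [ext]
        split
        · rfl
        · exact (h1 _ (by omega)).symm
      rw [e3]
      congr 1
      funext j
      have := hz j
      have e4 : ¬ (z j < ts.length) := by omega
      simp only [comp, FOTerm.subst, ext, e4, dif_neg, not_false_eq_true]
      exact (h2 j _ hm).symm
    · by_cases hX2 : X = e + n + 1
      · subst hX2
        have e1 : pd n (e+n+1) = e + n := by unfold pd; split <;> omega
        simp only [inst, hX, if_false, if_true, e1]
        rw [r_subst, r_subst, inst_cancel _ _ _ _ (· + (e+n+1)) (· + (e+n))]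
        · intro i; show i + (e+n+1) ≠ n; omega
        · intro i; unfold pd; split <;> omega
      · have e1 : pd n X ≠ e + n := by unfold pd; split <;> omega
        have e2 : pd (e+n+1) X ≠ n := by unfold pd; split <;> omega
        simp only [inst, hX, hX2, if_false, e1, e2]
        congr 1
        unfold pd; split <;> split <;> split <;> (try split) <;> omega
  | arr A B ihA ihB =>
    intro θ ζ η n hm h1 h2
    simp only [maxAr, max_le_iff] at hm
    simp only [inst]
    rw [ihA θ ζ η n hm.1 h1 h2, ihB θ ζ η n hm.2 h1 h2]
  | fall A ih =>
    intro θ ζ η n hm h1 h2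
    simp only [inst]
    rw [ih _ _ (comp η (shN 1)) n hm (fun i hi => by simp only [comp, h1 i hi])
      (fun j k hk => by simp only [comp, h2 j k hk])]
  | pall A ih =>
    intro θ ζ η n hm h1 h2
    simp only [inst]
    have := ih θ ζ η (n+1) hm h1 h2
    rw [← Nat.add_assoc] at this
    rw [this]

/-! ### Closure properties of typing -/

variable {E : Set (FOTerm S × FOTerm S)}

theorem eqE_subst {u v : FOTerm S} (h : EqE E u v) (σ : ℕ → FOTerm S) :
    EqE E (u.subst σ) (v.subst σ) := by
  unfold EqE at *
  induction h with
  | rel x y h =>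
    obtain ⟨p, hp, τ, rfl, rfl⟩ := h
    exact .rel _ _ ⟨p, hp, comp τ σ, t_subst_subst _ _ _, t_subst_subst _ _ _⟩
  | refl x => exact .refl _
  | symm x y _ ih => exact .symm _ _ ih
  | trans x y z _ _ ih1 ih2 => exact .trans _ _ _ ih1 ih2

theorem map_subst (Γ : List (Form S)) (σ τ : ℕ → FOTerm S) :
    (Γ.map (Form.substFO σ)).map (Form.substFO τ) = Γ.map (Form.substFO (comp σ τ)) := by
  rw [List.map_map]; congr 1; funext A; exact f_subst_subst A σ τ

theorem map_var (Γ : List (Form S)) : Γ.map (Form.substFO FOTerm.var) = Γ := by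
  have : (Form.substFO FOTerm.var : Form S → Form S) = id := by funext A; exact f_subst_var A
  rw [this, List.map_id]

theorem map_shift (Γ : List (Form S)) : Γ.map Form.shiftFO = Γ.map (Form.substFO (shN 1)) := rfl

theorem shift_lift (σ : ℕ → FOTerm S) : comp (shN 1) (FOTerm.liftSub σ) = comp σ (shN 1) := by
  rw [liftSub_eq, shN1_cons, sh_eq]

theorem lift_cons (σ : ℕ → FOTerm S) (u : FOTerm S) :
    comp (FOTerm.liftSub σ) (consS u FOTerm.var) = consS u σ := by
  rw [liftSub_eq, consS_comp, sh_eq, comp_assoc, shN1_cons, comp_var]; rfl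

/-- Generalise over the first `n` first order variables, then instantiate them. -/
theorem mass (t : Lam) : ∀ (n : ℕ) (Γ : List (Form S)) (B : Form S) (τ : ℕ → FOTerm S),
    (∀ i, τ (i + n) = FOTerm.var i) →
    AF2 S E (Γ.map (Form.substFO (shN n))) t B → AF2 S E Γ t (B.substFO τ) := by
  intro n
  induction n with
  | zero =>
    intro Γ B τ hτ h
    have : τ = FOTerm.var := funext hτ
    rw [this, f_subst_var]
    have h' : (shN 0 : ℕ → FOTerm S) = FOTerm.var := rfl
    rwa [h', map_var] at h
  | succ n ih =>
    intro Γ B τ hτ h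
    have e1 : Γ.map (Form.substFO (shN (n+1)))
        = (Γ.map (Form.substFO (shN n))).map Form.shiftFO := by
      rw [map_shift, map_subst]; rfl
    rw [e1] at h
    have h2 := AF2.fallE ((τ 0).subst (shN n)) (AF2.fallI h)
    have h3 := ih Γ _ (fun i => τ (i+1)) (fun i => by
      show τ (i + n + 1) = _
      exact hτ i) h2
    rw [substFO0_eq, f_subst_subst] at h3
    convert h3 using 2
    funext i
    cases i with
    | zero =>
      simp only [comp, consS]
      rw [t_subst_subst]
      have : comp (shN n) (fun i => τ (i+1)) = FOTerm.var := by
        funext i; exact hτ i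
      rw [this, t_subst_var]
    | succ i => rfl

theorem pallE_aux {Γ : List (Form S)} {t : Lam} {A : Form S}
    (ih : ∀ σ, AF2 S E (Γ.map (Form.substFO σ)) t ((Form.pall A).substFO σ))
    (G : Form S) (σ θ : ℕ → FOTerm S) :
    AF2 S E (Γ.map (Form.substFO σ)) t (inst G θ 0 (A.substFO σ)) := by
  obtain ⟨N, hN⟩ := f_bound G
  have h := ih (comp σ (shN N))
  rw [← map_subst] at h
  have h1 := AF2.pallE G h
  have h2 := mass t N _ _ (fun i => if i < N then θ i else FOTerm.var (i - N))
    (fun i => by simp) h1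
  rw [inst2_0_eq, inst_subst, f_subst_subst, comp_assoc, var_comp] at h2
  have e1 : comp (shN N) (fun i => if i < N then θ i else FOTerm.var (i - N)) = FOTerm.var := by
    funext i; simp [comp, shN, FOTerm.subst]
  rw [e1, comp_var] at h2
  rw [inst_ext G _ N hN θ (fun i => if i < N then θ i else FOTerm.var (i - N))]
  · exact h2
  · intro i hi; simp [hi]

theorem af2_subst {Γ : List (Form S)} {t : Lam} {A : Form S} (h : AF2 S E Γ t A) :
    ∀ σ, AF2 S E (Γ.map (Form.substFO σ)) t (A.substFO σ) := by
  induction h with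
  | var h => intro σ; exact .var (by simp [h])
  | absI _ ih => intro σ; exact .absI (ih σ)
  | appE _ _ ih1 ih2 => intro σ; exact .appE (ih1 σ) (ih2 σ)
  | fallI _ ih =>
    intro σ
    have := ih (FOTerm.liftSub σ)
    rw [map_shift, map_subst, shift_lift, ← map_subst] at this
    exact .fallI this
  | fallE u _ ih =>
    intro σ
    have := AF2.fallE (u.subst σ) (ih σ)
    rw [substFO0_eq, f_subst_subst, lift_cons] at this
    rw [substFO0_eq, f_subst_subst, consS_comp, var_comp]
    exact this
  | @pallI Γ _ A _ ih =>
    intro σ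
    have := ih σ
    refine .pallI ?_
    convert this using 1
    simp only [List.map_map]; congr 1; funext B
    exact (r_subst B _ σ).symm
  | pallE G _ ih =>
    intro σ
    rw [inst2_0_eq, inst_subst, var_comp]
    exact pallE_aux ih G σ σ
  | @eqE Γ t A u v _ huv ih =>
    intro σ
    have := ih σ
    rw [substFO0_eq, f_subst_subst, consS_comp, var_comp, ← lift_cons, ← f_subst_subst,
      ← substFO0_eq] at this ⊢
    exact .eqE this (eqE_subst huv σ)

theorem pallE' {Γ : List (Form S)} {t : Lam} {A : Form S} (h : AF2 S E Γ t (.pall A))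
    (G : Form S) (θ : ℕ → FOTerm S) : AF2 S E Γ t (inst G θ 0 A) := by
  have := pallE_aux (af2_subst h) G FOTerm.var θ
  rwa [map_var, f_subst_var] at this

theorem af2_rename2 {Γ : List (Form S)} {t : Lam} {A : Form S} (h : AF2 S E Γ t A) :
    ∀ ρ, AF2 S E (Γ.map (Form.rename2 ρ)) t (A.rename2 ρ) := by
  induction h with
  | var h => intro ρ; exact .var (by simp [h])
  | absI _ ih => intro ρ; exact .absI (ih ρ)
  | appE _ _ ih1 ih2 => intro ρ; exact .appE (ih1 ρ) (ih2 ρ)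
  | fallI _ ih =>
    intro ρ
    refine .fallI ?_
    convert ih ρ using 1
    simp only [List.map_map]; congr 1; funext B
    exact r_subst B _ _
  | fallE u _ ih =>
    intro ρ
    have := AF2.fallE u (ih ρ)
    rw [substFO0_eq, r_subst] at this
    rw [substFO0_eq]
    exact this
  | @pallI Γ _ A _ ih =>
    intro ρ
    have := ih (lft ρ)
    rw [rename2_pall]
    refine .pallI ?_
    convert this using 1
    simp only [List.map_map]; congr 1; funext B
    simp only [Function.comp, r_r]; rfl
  | pallE G _ ih =>
    intro ρ
    have := ih ρ
    rw [rename2_pall] at this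
    have h2 := AF2.pallE (G.rename2 ρ) this
    rw [inst2_0_eq] at h2 ⊢
    rw [inst_rename G _ ρ _ 0 0 (lft ρ) ρ rfl]
    · exact h2
    · intro X hX; cases X with
      | zero => exact absurd rfl hX
      | succ X => simp [lft]
    · intro X hX; cases X with
      | zero => exact absurd rfl hX
      | succ X => simp [lft, pd]
    · intro i; rfl
  | eqE _ huv ih =>
    intro ρ
    have := ih ρ
    rw [substFO0_eq, ← r_subst, ← substFO0_eq] at this ⊢
    exact .eqE this huv

theorem inst_shift2 (G B : Form S) (θ : ℕ → FOTerm S) (e : ℕ) :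
    (inst G θ e B).rename2 (· + 1) = inst G θ (e+1) (B.rename2 (· + 1)) := by
  rw [inst_rename G B (fun i => i) θ e (e+1) (· + 1) (· + 1) rfl, r_id]
  · intro X hX; show X + 1 ≠ e + 1; omega
  · intro X hX; unfold pd; split <;> split <;> omega
  · intro i; omega

theorem af2_inst (G : Form S) {Γ : List (Form S)} {t : Lam} {A : Form S} (h : AF2 S E Γ t A) :
    ∀ θ e, AF2 S E (Γ.map (inst G θ e)) t (inst G θ e A) := by
  induction h with
  | var h => intro θ e; exact .var (by simp [h])
  | absI _ ih => intro θ e; exact .absI (ih θ e)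
  | appE _ _ ih1 ih2 => intro θ e; exact .appE (ih1 θ e) (ih2 θ e)
  | fallI _ ih =>
    intro θ e
    refine .fallI ?_
    convert ih (comp θ (shN 1)) e using 1
    simp only [List.map_map]; congr 1; funext B
    exact inst_subst G B _ _ _
  | fallE u _ ih =>
    intro θ e
    have := AF2.fallE u (ih θ e)
    rw [substFO0_eq, inst_subst, comp_assoc, shN1_cons, comp_var] at this
    rw [substFO0_eq]
    exact this
  | @pallI Γ _ A _ ih =>
    intro θ e
    refine .pallI ?_
    convert ih θ (e+1) using 1
    simp only [List.map_map]; congr 1; funext B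
    exact inst_shift2 G B θ e
  | @pallE Γ t A H _ ih =>
    intro θ e
    have h1 := ih θ e
    obtain ⟨b, hb⟩ := f_bound H
    rw [inst2_0_eq]
    have := inst_inst G H A (maxAr A) b e (fun j => b + maxAr A + (maxAr A + 1) * j)
      (fun j => by nlinarith [Nat.zero_le ((maxAr A + 1) * j)]) hb θ FOTerm.var
      (fun i => if i < b then FOTerm.var i else θ ((i - b) / (maxAr A + 1))) 0 le_rfl
      (fun i hi => by simp [hi])
      (fun j k hk => by
        generalize maxAr A = m at *
        have e1 : ¬ (b + m + (m + 1) * j - k < b) := by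
          have := Nat.zero_le ((m+1)*j); omega
        have e2 : b + m + (m + 1) * j - k - b = (m - k) + (m + 1) * j := by omega
        simp only [e1, if_false, e2]
        congr 1
        rw [Nat.add_mul_div_left _ _ (Nat.succ_pos m), Nat.div_eq_of_lt (by omega), Nat.zero_add])
    rw [Nat.add_zero] at this
    rw [this]
    exact pallE' h1 _ _
  | @eqE Γ t A u v _ huv ih =>
    intro θ e
    have key : ∀ w, inst G θ e (A.substFO0 w) = (inst G (comp θ (shN 1)) e A).substFO0 w := by
      intro w
      rw [substFO0_eq, substFO0_eq, inst_subst, comp_assoc, shN1_cons, comp_var]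
    have := ih θ e
    rw [key] at this ⊢
    exact .eqE this huv

/-! ### Renaming and substitution of λ-variables -/

theorem af2_ren {Γ : List (Form S)} {t : Lam} {A : Form S} (h : AF2 S E Γ t A) :
    ∀ (Δ : List (Form S)) (ρ : ℕ → ℕ),
      (∀ i B, Γ[i]? = some B → Δ[ρ i]? = some B) → AF2 S E Δ (t.rename ρ) A := by
  induction h with
  | var h => intro Δ ρ hρ; exact .var (hρ _ _ h)
  | absI _ ih =>
    intro Δ ρ hρ
    refine .absI (ih _ _ ?_)
    intro i B hi
    cases i with
    | zero => simpa using hi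
    | succ i => simpa using hρ i B (by simpa using hi)
  | appE _ _ ih1 ih2 => intro Δ ρ hρ; exact .appE (ih1 Δ ρ hρ) (ih2 Δ ρ hρ)
  | fallI _ ih =>
    intro Δ ρ hρ
    refine .fallI (ih _ _ ?_)
    intro i B hi
    simp only [List.getElem?_map, Option.map_eq_some_iff] at hi ⊢
    obtain ⟨C, hC, rfl⟩ := hi
    exact ⟨C, hρ i C hC, rfl⟩
  | fallE u _ ih => intro Δ ρ hρ; exact .fallE u (ih Δ ρ hρ)
  | pallI _ ih =>
    intro Δ ρ hρ
    refine .pallI (ih _ _ ?_)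
    intro i B hi
    simp only [List.getElem?_map, Option.map_eq_some_iff] at hi ⊢
    obtain ⟨C, hC, rfl⟩ := hi
    exact ⟨C, hρ i C hC, rfl⟩
  | pallE G _ ih => intro Δ ρ hρ; exact .pallE G (ih Δ ρ hρ)
  | eqE _ huv ih => intro Δ ρ hρ; exact .eqE (ih Δ ρ hρ) huv

theorem af2_sub {Γ : List (Form S)} {t : Lam} {A : Form S} (h : AF2 S E Γ t A) :
    ∀ (Δ : List (Form S)) (s : ℕ → Lam),
      (∀ i B, Γ[i]? = some B → AF2 S E Δ (s i) B) → AF2 S E Δ (t.subst s) A := by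
  induction h with
  | var h => intro Δ s hs; exact hs _ _ h
  | absI _ ih =>
    intro Δ s hs
    refine .absI (ih _ _ ?_)
    intro i B hi
    cases i with
    | zero => exact .var (by simpa using hi)
    | succ i =>
      exact af2_ren (hs i B (by simpa using hi)) _ _ (fun j C hj => by simpa using hj)
  | appE _ _ ih1 ih2 => intro Δ s hs; exact .appE (ih1 Δ s hs) (ih2 Δ s hs)
  | fallI _ ih =>
    intro Δ s hs
    refine .fallI (ih _ _ ?_)
    intro i B hi
    simp only [List.getElem?_map, Option.map_eq_some_iff] at hi
    obtain ⟨C, hC, rfl⟩ := hi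
    exact af2_subst (hs i C hC) _
  | fallE u _ ih => intro Δ s hs; exact .fallE u (ih Δ s hs)
  | pallI _ ih =>
    intro Δ s hs
    refine .pallI (ih _ _ ?_)
    intro i B hi
    simp only [List.getElem?_map, Option.map_eq_some_iff] at hi
    obtain ⟨C, hC, rfl⟩ := hi
    exact af2_rename2 (hs i C hC) _
  | pallE G _ ih => intro Δ s hs; exact .pallE G (ih Δ s hs)
  | eqE _ huv ih => intro Δ s hs; exact .eqE (ih Δ s hs) huv

theorem lam_lift_var : Lam.liftSub Lam.var = Lam.var := by
  funext i; cases i <;> rfl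

theorem lam_subst_var (t : Lam) : t.subst Lam.var = t := by
  induction t with
  | var i => rfl
  | app u v ihu ihv => simp [Lam.subst, ihu, ihv]
  | abs u ih => simp [Lam.subst, lam_lift_var, ih]

/-! ### Generation lemma for abstractions -/

def Gen (E : Set (FOTerm S × FOTerm S)) (u : Lam) : Form S → List (Form S) → Prop
  | .bot, _ => False
  | .pr _ _, _ => False
  | .pvar _ _, _ => False
  | .arr A B, Γ => AF2 S E (A :: Γ) u B
  | .fall C, Γ => Gen E u C (Γ.map Form.shiftFO)
  | .pall C, Γ => Gen E u C (Γ.map (Form.rename2 (· + 1)))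

theorem gen_subst {u : Lam} (C : Form S) : ∀ (Γ : List (Form S)) σ, Gen E u C Γ →
    Gen E u (C.substFO σ) (Γ.map (Form.substFO σ)) := by
  induction C with
  | bot => intro Γ σ h; exact h.elim
  | pr P ts => intro Γ σ h; exact h.elim
  | pvar P ts => intro Γ σ h; exact h.elim
  | arr A B _ _ => intro Γ σ h; exact af2_subst h σ
  | fall A ih =>
    intro Γ σ h
    have := ih _ (FOTerm.liftSub σ) h
    rw [map_shift, map_subst, shift_lift, ← map_subst] at this
    exact this
  | pall A ih =>
    intro Γ σ h
    have := ih _ σ h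
    simp only [Form.substFO, Gen]
    convert this using 1
    simp only [List.map_map]; congr 1; funext B
    exact (r_subst B _ σ).symm

theorem gen_inst {u : Lam} (G C : Form S) : ∀ (Γ : List (Form S)) θ e, Gen E u C Γ →
    Gen E u (inst G θ e C) (Γ.map (inst G θ e)) := by
  induction C with
  | bot => intro Γ θ e h; exact h.elim
  | pr P ts => intro Γ θ e h; exact h.elim
  | pvar P ts => intro Γ θ e h; exact h.elim
  | arr A B _ _ => intro Γ θ e h; exact af2_inst G h θ e
  | fall A ih =>
    intro Γ θ e h
    simp only [inst, Gen]
    convert ih _ (comp θ (shN 1)) e h using 1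
    simp only [List.map_map]; congr 1; funext B
    exact inst_subst G B _ _ _
  | pall A ih =>
    intro Γ θ e h
    simp only [inst, Gen]
    convert ih _ θ (e+1) h using 1
    simp only [List.map_map]; congr 1; funext B
    exact inst_shift2 G B θ e

/-- Two substitutions which differ by one equational replacement. -/
def EqS (E : Set (FOTerm S × FOTerm S)) (σ σ' : ℕ → FOTerm S) : Prop :=
  ∃ ρ u v, EqE E u v ∧ σ = comp ρ (consS u FOTerm.var) ∧ σ' = comp ρ (consS v FOTerm.var)

theorem eqS_symm {σ σ' : ℕ → FOTerm S} (h : EqS E σ σ') : EqS E σ' σ := by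
  obtain ⟨ρ, u, v, h, h1, h2⟩ := h
  exact ⟨ρ, v, u, .symm _ _ h, h2, h1⟩

theorem eqS_af2 {σ σ' : ℕ → FOTerm S} (h : EqS E σ σ') {Γ : List (Form S)} {t : Lam} {A : Form S}
    (ht : AF2 S E Γ t (A.substFO σ)) : AF2 S E Γ t (A.substFO σ') := by
  obtain ⟨ρ, u, v, h, rfl, rfl⟩ := h
  rw [← f_subst_subst, ← substFO0_eq] at ht ⊢
  exact .eqE ht h

theorem eqS_lift {σ σ' : ℕ → FOTerm S} (h : EqS E σ σ') :
    EqS E (FOTerm.liftSub σ) (FOTerm.liftSub σ') := by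
  obtain ⟨ρ, u, v, h, rfl, rfl⟩ := h
  have key : ∀ w : FOTerm S, FOTerm.liftSub (comp ρ (consS w FOTerm.var)) =
      comp (consS (FOTerm.var 1) (comp ρ (consS (FOTerm.var 0) (shN 2))))
        (consS (w.subst (shN 1)) FOTerm.var) := by
    intro w
    rw [liftSub_eq, sh_eq, consS_comp, comp_assoc, comp_assoc, consS_comp, consS_comp]
    rfl
  exact ⟨_, _, _, eqE_subst h (shN 1), key u, key v⟩

theorem gen_eq {u : Lam} (C : Form S) : ∀ (Γ : List (Form S)) σ σ', EqS E σ σ' →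
    Gen E u (C.substFO σ) Γ → Gen E u (C.substFO σ') Γ := by
  induction C with
  | bot => intro Γ σ σ' _ h; exact h.elim
  | pr P ts => intro Γ σ σ' _ h; exact h.elim
  | pvar P ts => intro Γ σ σ' _ h; exact h.elim
  | arr A B _ _ =>
    intro Γ σ σ' hs h
    have h1 : AF2 S E (A.substFO σ :: Γ) u (B.substFO σ) := h
    have h2 := eqS_af2 hs h1
    have h3 := af2_sub h2 (A.substFO σ' :: Γ) Lam.var (by
      intro i D hi
      cases i with
      | zero =>
        obtain rfl : A.substFO σ = D := by simpa using hi
        exact eqS_af2 (eqS_symm hs) (.var rfl)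
      | succ i => exact .var (by simpa using hi))
    rw [lam_subst_var] at h3
    exact h3
  | fall A ih => intro Γ σ σ' hs h; exact ih _ _ _ (eqS_lift hs) h
  | pall A ih => intro Γ σ σ' hs h; exact ih _ _ _ hs h

theorem gen_abs {Γ : List (Form S)} {t : Lam} {A : Form S} (h : AF2 S E Γ t A) :
    ∀ u, t = Lam.abs u → Gen E u A Γ := by
  induction h with
  | var h => intro u hu; cases hu
  | absI h _ => intro u hu; cases hu; exact h
  | appE _ _ _ _ => intro u hu; cases hu
  | fallI _ ih => intro u hu; exact ih u hu
  | fallE w _ ih =>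
    intro u hu
    have h1 := ih u hu
    simp only [Gen] at h1
    have := gen_subst _ _ (consS w FOTerm.var) h1
    rw [map_shift, map_subst, shN1_cons, map_var] at this
    rw [substFO0_eq]; exact this
  | pallI _ ih => intro u hu; exact ih u hu
  | pallE G _ ih =>
    intro u hu
    have h1 := ih u hu
    simp only [Gen] at h1
    have := gen_inst G _ _ FOTerm.var 0 h1
    rw [inst2_0_eq]
    convert this using 1
    rw [List.map_map]
    refine (List.map_id _).symm.trans ?_
    congr 1; funext B
    simp only [Function.comp, id]
    rw [inst_cancel _ _ _ _ _ (fun i => i), r_id]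
    · intro i; show i + 1 ≠ 0; omega
    · intro i; simp [pd]
  | eqE _ huv ih =>
    intro u hu
    have := ih u hu
    rw [substFO0_eq] at this ⊢
    exact gen_eq _ _ _ _ ⟨FOTerm.var, _, _, huv, rfl, rfl⟩ this

theorem af2_beta {Γ : List (Form S)} {t : Lam} {A : Form S} (h : AF2 S E Γ t A) :
    ∀ t', Lam.Beta t t' → AF2 S E Γ t' A := by
  induction h with
  | var h => intro t' hb; cases hb
  | absI _ ih => intro t' hb; cases hb with
    | abs hb => exact .absI (ih _ hb)
  | appE h1 h2 ih1 ih2 =>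
    intro t' hb
    cases hb with
    | beta u v =>
      have h3 := gen_abs h1 u rfl
      refine af2_sub h3 _ _ ?_
      intro i B hi
      cases i with
      | zero => obtain rfl := Option.some.inj hi; exact h2
      | succ i => exact .var (by simpa using hi)
    | appL _ hb => exact .appE (ih1 _ hb) h2
    | appR _ hb => exact .appE h1 (ih2 _ hb)
  | fallI _ ih => intro t' hb; exact .fallI (ih _ hb)
  | fallE w _ ih => intro t' hb; exact .fallE w (ih _ hb)
  | pallI _ ih => intro t' hb; exact .pallI (ih _ hb)
  | pallE G _ ih => intro t' hb; exact .pallE G (ih _ hb)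
  | eqE _ huv ih => intro t' hb; exact .eqE (ih _ hb) huv

end SR

/-- In the AF2 type system, types are preserved by β-reduction. -/
theorem stmt1 (S : Sig) (E : Set (FOTerm S × FOTerm S)) (Γ : List (Form S))
    (t t' : Lam) (A : Form S) (h : AF2 S E Γ t A)
    (hred : Relation.ReflTransGen Lam.Beta t t') : AF2 S E Γ t' A := by
  induction hred with
  | refl => exact h
  | tail _ hb ih => exact SR.af2_beta ih _ hb
end

section
/- In the AF2 type system, every typable λ-term is strongly normalizable: if Γ ⊢_AF2 t : A then every β-reduction sequence starting from t terminates. -/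
/-! Strong normalization by reducibility candidates, forgetting first order data. -/

namespace SNProof

open Lam

def scons {α : Type} (a : α) (f : ℕ → α) : ℕ → α
  | 0 => a
  | n+1 => f n

def upR (ρ : ℕ → ℕ) : ℕ → ℕ
  | 0 => 0
  | j+1 => ρ j + 1

theorem rename_abs (ρ : ℕ → ℕ) (u : Lam) : (Lam.abs u).rename ρ = Lam.abs (u.rename (upR ρ)) := by
  simp only [Lam.rename]
  congr 2

theorem subst0_eq (u v : Lam) : u.subst0 v = u.subst (scons v Lam.var) := by
  unfold Lam.subst0
  congr 1

theorem rename_rename (t : Lam) : ∀ (r s : ℕ → ℕ),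
    (t.rename r).rename s = t.rename (fun i => s (r i)) := by
  induction t with
  | var i => intros; rfl
  | app u v hu hv => intro r s; simp [Lam.rename, hu, hv]
  | abs u hu =>
    intro r s
    rw [rename_abs, rename_abs, rename_abs, hu]
    congr 2
    funext i; cases i <;> rfl

theorem subst_rename (t : Lam) : ∀ (r : ℕ → ℕ) (σ : ℕ → Lam),
    (t.rename r).subst σ = t.subst (fun i => σ (r i)) := by
  induction t with
  | var i => intros; rfl
  | app u v hu hv => intro r s; simp [Lam.rename, Lam.subst, hu, hv]
  | abs u hu =>
    intro r s
    rw [rename_abs, Lam.subst, Lam.subst, hu]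
    congr 2
    funext i; cases i <;> rfl

theorem rename_subst (t : Lam) : ∀ (σ : ℕ → Lam) (r : ℕ → ℕ),
    (t.subst σ).rename r = t.subst (fun i => (σ i).rename r) := by
  induction t with
  | var i => intros; rfl
  | app u v hu hv => intro r s; simp [Lam.rename, Lam.subst, hu, hv]
  | abs u hu =>
    intro σ r
    rw [Lam.subst, rename_abs, Lam.subst, hu]
    congr 2
    funext i
    cases i with
    | zero => rfl
    | succ i => simp [Lam.liftSub, rename_rename, upR]

theorem subst_subst (t : Lam) : ∀ (σ τ : ℕ → Lam),
    (t.subst σ).subst τ = t.subst (fun i => (σ i).subst τ) := by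
  induction t with
  | var i => intros; rfl
  | app u v hu hv => intro r s; simp [Lam.subst, hu, hv]
  | abs u hu =>
    intro σ τ
    rw [Lam.subst, Lam.subst, Lam.subst, hu]
    congr 2
    funext i
    cases i with
    | zero => rfl
    | succ i => simp [Lam.liftSub, subst_rename, rename_subst]

theorem subst_var (t : Lam) : t.subst Lam.var = t := by
  induction t with
  | var i => rfl
  | app u v hu hv => simp [Lam.subst, hu, hv]
  | abs u hu =>
    rw [Lam.subst]
    have : Lam.liftSub Lam.var = Lam.var := by funext i; cases i <;> rfl
    rw [this, hu]

theorem lift_subst0 (t v : Lam) (σ : ℕ → Lam) :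
    (t.subst (Lam.liftSub σ)).subst0 v = t.subst (scons v σ) := by
  rw [subst0_eq, subst_subst]
  congr 1
  funext i
  cases i with
  | zero => rfl
  | succ i =>
    simp only [Lam.liftSub, subst_rename]
    exact subst_var _

theorem subst0_subst (u v : Lam) (σ : ℕ → Lam) :
    (u.subst0 v).subst σ = (u.subst (Lam.liftSub σ)).subst0 (v.subst σ) := by
  rw [lift_subst0, subst0_eq, subst_subst]
  congr 1
  funext i; cases i <;> rfl

theorem beta_subst {u u' : Lam} (h : Lam.Beta u u') : ∀ σ : ℕ → Lam,
    Lam.Beta (u.subst σ) (u'.subst σ) := by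
  induction h with
  | beta u v =>
    intro σ
    rw [subst0_subst]
    exact Lam.Beta.beta _ _
  | appL v _ ih => intro σ; exact Lam.Beta.appL _ (ih σ)
  | appR u _ ih => intro σ; exact Lam.Beta.appR _ (ih σ)
  | abs _ ih => intro σ; exact Lam.Beta.abs (ih _)

abbrev SN (t : Lam) : Prop := Acc (fun u v : Lam => Lam.Beta v u) t

theorem sn_of_map {f : Lam → Lam} (hf : ∀ u u', Lam.Beta u u' → Lam.Beta (f u) (f u'))
    {t : Lam} (h : SN (f t)) : SN t := by
  generalize ht : f t = s at h
  induction h generalizing t with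
  | intro s _ ih =>
    subst ht
    exact Acc.intro _ fun u hu => ih (f u) (hf _ _ hu) rfl

theorem sn_abs {t : Lam} (h : SN t) : SN (Lam.abs t) := by
  induction h with
  | intro t _ ih =>
    refine Acc.intro _ fun u hu => ?_
    cases hu with
    | abs h => exact ih _ h

structure IsCR (P : Lam → Prop) : Prop where
  sn : ∀ t, P t → SN t
  red : ∀ t u, P t → Lam.Beta t u → P u
  neu : ∀ t, ¬ t.IsAbs → (∀ u, Lam.Beta t u → P u) → P t

theorem IsCR.var {P : Lam → Prop} (h : IsCR P) (i : ℕ) : P (Lam.var i) :=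
  h.neu _ (fun h => h) (fun u hu => by cases hu)

theorem isCR_SN : IsCR SN where
  sn _ h := h
  red _ _ h hb := h.inv hb
  neu _ _ h := Acc.intro _ h

def Arr (P Q : Lam → Prop) (t : Lam) : Prop := ∀ v, P v → Q (Lam.app t v)

theorem isCR_arr {P Q : Lam → Prop} (hP : IsCR P) (hQ : IsCR Q) : IsCR (Arr P Q) where
  sn t h := sn_of_map (f := fun t => Lam.app t (Lam.var 0)) (fun _ _ h => Lam.Beta.appL _ h)
    (hQ.sn _ (h _ (hP.var 0)))
  red t u h hb v hv := hQ.red _ _ (h v hv) (Lam.Beta.appL _ hb)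
  neu t hn h := by
    intro v hv
    have hs := hP.sn v hv
    induction hs with
    | intro v _ ih =>
      refine hQ.neu _ (fun h => h) fun w hw => ?_
      cases hw with
      | beta => exact (hn trivial).elim
      | appL _ hb => exact h _ hb v hv
      | appR _ hb => exact ih _ hb (hP.red _ _ hv hb)

theorem arr_abs {P Q : Lam → Prop} (hP : IsCR P) (hQ : IsCR Q) (u : Lam)
    (h : ∀ v, P v → Q (u.subst0 v)) : Arr P Q (Lam.abs u) := by
  have hu : SN u := by
    have h0 := hQ.sn _ (h _ (hP.var 0))
    refine sn_of_map (f := fun u => u.subst0 (Lam.var 0)) (fun a b hab => ?_) h0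
    exact beta_subst hab _
  induction hu with
  | intro u _ ihu =>
    intro v hv
    have hs := hP.sn v hv
    induction hs with
    | intro v _ ih =>
      refine hQ.neu _ (fun h => h) fun w hw => ?_
      cases hw with
      | beta => exact h v hv
      | appL _ hb =>
        cases hb with
        | abs hb =>
          exact ihu _ hb (fun v hv => hQ.red _ _ (h v hv) (beta_subst hb _)) v hv
      | appR _ hb => exact ih _ hb (hP.red _ _ hv hb)

variable {S : Sig}

def interp : Form S → (ℕ → Lam → Prop) → Lam → Prop
  | .bot, _ => SN
  | .pr _ _, _ => SN
  | .pvar X _, ρ => ρ X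
  | .arr A B, ρ => Arr (interp A ρ) (interp B ρ)
  | .fall A, ρ => interp A ρ
  | .pall A, ρ => fun t => ∀ C, IsCR C → interp A (scons C ρ) t

theorem isCR_scons {C : Lam → Prop} {ρ : ℕ → Lam → Prop} (hC : IsCR C) (h : ∀ i, IsCR (ρ i)) :
    ∀ i, IsCR (scons C ρ i) := by
  intro i; cases i
  · exact hC
  · exact h _

theorem isCR_interp (A : Form S) : ∀ ρ : ℕ → Lam → Prop, (∀ i, IsCR (ρ i)) →
    IsCR (interp A ρ) := by
  induction A with
  | bot => intro _ _; exact isCR_SN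
  | pr _ _ => intro _ _; exact isCR_SN
  | pvar X _ => intro ρ h; exact h X
  | arr A B hA hB => intro ρ h; exact isCR_arr (hA ρ h) (hB ρ h)
  | fall A hA => exact hA
  | pall A hA =>
    intro ρ h
    exact {
      sn := fun t ht => (hA _ (isCR_scons isCR_SN h)).sn t (ht _ isCR_SN)
      red := fun t u ht hb C hC => (hA _ (isCR_scons hC h)).red t u (ht C hC) hb
      neu := fun t hn ht C hC =>
        (hA _ (isCR_scons hC h)).neu t hn (fun u hu => ht u hu C hC) }

theorem interp_substFO (A : Form S) : ∀ (σ : ℕ → FOTerm S) (ρ : ℕ → Lam → Prop),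
    interp (A.substFO σ) ρ = interp A ρ := by
  induction A with
  | bot => intros; rfl
  | pr _ _ => intros; rfl
  | pvar _ _ => intros; rfl
  | arr A B hA hB => intro σ ρ; simp [Form.substFO, interp, hA, hB]
  | fall A hA => intro σ ρ; simp [Form.substFO, interp, hA]
  | pall A hA => intro σ ρ; simp [Form.substFO, interp, hA]

theorem interp_rename2 (A : Form S) : ∀ (r : ℕ → ℕ) (ρ : ℕ → Lam → Prop),
    interp (A.rename2 r) ρ = interp A (fun i => ρ (r i)) := by
  induction A with
  | bot => intros; rfl
  | pr _ _ => intros; rfl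
  | pvar _ _ => intros; rfl
  | arr A B hA hB => intro σ ρ; simp [Form.rename2, interp, hA, hB]
  | fall A hA => intro σ ρ; simp [Form.rename2, interp, hA]
  | pall A hA =>
    intro r ρ
    simp only [Form.rename2, interp, hA]
    funext t
    refine forall_congr fun C => forall_congr fun _ => ?_
    congr 1
    funext i; cases i <;> rfl

/-- Insert `C` at position `e`. -/
def ins (C : Lam → Prop) (e : ℕ) (ρ : ℕ → Lam → Prop) : ℕ → Lam → Prop :=
  fun X => if X = e then C else ρ (if e < X then X - 1 else X)

theorem interp_inst2 (G A : Form S) : ∀ (d e : ℕ) (ρ : ℕ → Lam → Prop),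
    interp (Form.inst2 G d e A) ρ = interp A (ins (interp G (fun i => ρ (i + e))) e ρ) := by
  induction A with
  | bot => intros; rfl
  | pr _ _ => intros; rfl
  | pvar X ts =>
    intro d e ρ
    by_cases h : X = e
    · simp [Form.inst2, interp, ins, h, interp_substFO, interp_rename2]
    · simp [Form.inst2, interp, ins, h]
  | arr A B hA hB => intro d e ρ; simp [Form.inst2, interp, hA, hB]
  | fall A hA => intro d e ρ; simp [Form.inst2, interp, hA]
  | pall A hA =>
    intro d e ρ
    simp only [Form.inst2, interp, hA]
    funext t
    refine forall_congr fun C => forall_congr fun _ => ?_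
    congr 1
    funext i
    cases i with
    | zero => simp [ins, scons]
    | succ i =>
      by_cases h : i = e
      · simp only [ins, scons, h, if_true]
        rfl
      · by_cases h2 : e < i
        · obtain ⟨k, rfl⟩ : ∃ k, i = k + 1 := ⟨i - 1, by omega⟩
          have h3 : e ≤ k := by omega
          simp [ins, scons, h, h3]
        · simp [ins, scons, h, h2]

theorem interp_inst2_0 (A G : Form S) (ρ : ℕ → Lam → Prop) :
    interp (A.inst2_0 G) ρ = interp A (scons (interp G ρ) ρ) := by
  unfold Form.inst2_0
  rw [interp_inst2]
  congr 1
  funext i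
  cases i with
  | zero => rfl
  | succ i => simp [ins, scons]

theorem adequacy {E : Set (FOTerm S × FOTerm S)} {Γ : List (Form S)} {t : Lam} {A : Form S}
    (h : AF2 S E Γ t A) : ∀ (ρ : ℕ → Lam → Prop), (∀ i, IsCR (ρ i)) → ∀ σ : ℕ → Lam,
      (∀ i B, Γ[i]? = some B → interp B ρ (σ i)) → interp A ρ (t.subst σ) := by
  induction h with
  | var hi => intro ρ _ σ hσ; exact hσ _ _ hi
  | absI _ ih =>
    intro ρ hρ σ hσ
    refine arr_abs (isCR_interp _ ρ hρ) (isCR_interp _ ρ hρ) _ fun v hv => ?_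
    rw [lift_subst0]
    refine ih ρ hρ _ fun i B hB => ?_
    cases i with
    | zero =>
      simp at hB
      subst hB
      exact hv
    | succ i => exact hσ i B (by simpa using hB)
  | appE _ _ ihu ihv => intro ρ hρ σ hσ; exact ihu ρ hρ σ hσ _ (ihv ρ hρ σ hσ)
  | fallI _ ih =>
    intro ρ hρ σ hσ
    refine ih ρ hρ σ fun i B hB => ?_
    rw [List.getElem?_map, Option.map_eq_some_iff] at hB
    obtain ⟨B', hB', rfl⟩ := hB
    rw [Form.shiftFO, interp_substFO]
    exact hσ i B' hB'
  | fallE u _ ih =>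
    intro ρ hρ σ hσ
    rw [Form.substFO0, interp_substFO]
    exact ih ρ hρ σ hσ
  | pallI _ ih =>
    intro ρ hρ σ hσ C hC
    refine ih _ (isCR_scons hC hρ) σ fun i B hB => ?_
    rw [List.getElem?_map, Option.map_eq_some_iff] at hB
    obtain ⟨B', hB', rfl⟩ := hB
    rw [interp_rename2]
    exact hσ i B' hB'
  | pallE G _ ih =>
    intro ρ hρ σ hσ
    rw [interp_inst2_0]
    exact ih ρ hρ σ hσ _ (isCR_interp G ρ hρ)
  | eqE _ _ ih =>
    intro ρ hρ σ hσ
    have := ih ρ hρ σ hσ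
    rw [Form.substFO0, interp_substFO] at this ⊢
    exact this

end SNProof

/-- In the AF2 type system, typable λ-terms are strongly normalizable:
every β-reduction sequence from a typable term terminates. -/
theorem stmt2 (S : Sig) (E : Set (FOTerm S × FOTerm S)) (Γ : List (Form S))
    (t : Lam) (A : Form S) (h : AF2 S E Γ t A) :
    Acc (fun u v : Lam => Lam.Beta v u) t := by
  have hρ : ∀ _ : ℕ, SNProof.IsCR SNProof.SN := fun _ => SNProof.isCR_SN
  have := SNProof.adequacy h (fun _ => SNProof.SN) hρ Lam.var
    (fun i B _ => (SNProof.isCR_interp B _ hρ).var i)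
  rw [SNProof.subst_var] at this
  exact (SNProof.isCR_interp A _ hρ).sn t this
end

section
/- Krivine's storage theorem: if ⊢_AF2 T : ∀x{N^g[x] → ¬¬N[x]}, then T is a storage operator for Church integers, i.e. for every n ∈ ℕ there is a λ-term τₙ ≃β n̲ such that for every θₙ ≃β n̲ there is a substitution σ with (T)θₙ f ≻ (f)σ(τₙ) (f a fresh variable). -/
/- The language of arithmetic: a constant 0 and a unary function symbol s. -/

inductive NatFn : Type
  | zero : NatFn
  | succ : NatFn

/-- The signature with a constant symbol `0` and a unary function symbol `s`. -/
def NatSig : Sig where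
  Fn := NatFn
  arFn := fun f => match f with | .zero => 0 | .succ => 1
  Pr := Empty

/-- The first order term `0`. -/
def zeroT : FOTerm NatSig := .fn NatFn.zero (fun i => i.elim0)

/-- The first order term `s(u)`. -/
def succT (u : FOTerm NatSig) : FOTerm NatSig := .fn NatFn.succ (fun _ => u)

/-- The first order term `sⁿ(0)`. -/
def numT : ℕ → FOTerm NatSig
  | 0 => zeroT
  | n+1 => succT (numT n)

/-- The type of integers `N[u] = ∀X{X(0), ∀y(X(y) → X(sy)) → X(u)}`. -/
def NForm (u : FOTerm NatSig) : Form NatSig :=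
  .pall (.arr (.pvar 0 [zeroT])
    (.arr (.fall (.arr (.pvar 0 [FOTerm.var 0]) (.pvar 0 [succT (FOTerm.var 0)])))
      (.pvar 0 [u])))

/-- A set of equations is adequate with the type of integers iff
`s(a) ≉ 0` and `s(a) ≈ s(b)` implies `a ≈ b`. -/
def Adequate (E : Set (FOTerm NatSig × FOTerm NatSig)) : Prop :=
  (∀ a, ¬ EqE E (succT a) zeroT) ∧
  (∀ a b, EqE E (succT a) (succT b) → EqE E a b)

/-- The Gödel translation `F^g`, obtained by putting `¬` in front of
each atomic subformula of `F`. -/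
def Form.godel {S : Sig} : Form S → Form S
  | .bot => .neg .bot
  | .pr P ts => .neg (.pr P ts)
  | .pvar X ts => .neg (.pvar X ts)
  | .arr A B => .arr A.godel B.godel
  | .fall A => .fall A.godel
  | .pall A => .pall A.godel

/-- The type `∀x{N^g[x] → ¬¬N[x]}` of storage operators. -/
def storType : Form NatSig :=
  .fall (.arr (NForm (FOTerm.var 0)).godel (.neg (.neg (NForm (FOTerm.var 0)))))

open Relation

theorem rtgLift {α β : Type*} {r : α → α → Prop} {q : β → β → Prop} (f : α → β)
    (hf : ∀ a b, r a b → q (f a) (f b)) {a b : α} (h : ReflTransGen r a b) :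
    ReflTransGen q (f a) (f b) := by
  induction h with
  | refl => exact .refl
  | tail _ h ih => exact ih.tail (hf _ _ h)

namespace Lam

def consE {α : Type*} (a : α) (ρ : ℕ → α) : ℕ → α
  | 0 => a
  | i+1 => ρ i

def up (ρ : ℕ → ℕ) : ℕ → ℕ := fun i => match i with | 0 => 0 | j+1 => ρ j + 1

theorem rename_abs (ρ : ℕ → ℕ) (u : Lam) : (abs u).rename ρ = abs (u.rename (up ρ)) := rfl

theorem subst0_eq (u v : Lam) : u.subst0 v = u.subst (consE v var) := by
  unfold subst0; congr 1

theorem rename_eq_subst (t : Lam) : ∀ ρ, t.rename ρ = t.subst (fun i => var (ρ i)) := by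
  induction t with
  | var i => intro ρ; rfl
  | app u v hu hv => intro ρ; simp [rename, subst, hu, hv]
  | abs u hu =>
    intro ρ
    rw [rename_abs, hu]
    simp only [subst]
    congr 2; funext i; cases i <;> rfl

theorem subst_rename (t : Lam) : ∀ ρ σ, (t.rename ρ).subst σ = t.subst (fun i => σ (ρ i)) := by
  induction t with
  | var i => intro ρ σ; rfl
  | app u v hu hv => intro ρ σ; simp [rename, subst, hu, hv]
  | abs u hu =>
    intro ρ σ
    rw [rename_abs]
    simp only [subst, hu]
    congr 2; funext i; cases i <;> rfl

theorem rename_subst (t : Lam) : ∀ ρ σ, (t.subst σ).rename ρ = t.subst (fun i => (σ i).rename ρ) := by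
  induction t with
  | var i => intro ρ σ; rfl
  | app u v hu hv => intro ρ σ; simp [rename, subst, hu, hv]
  | abs u hu =>
    intro ρ σ
    simp only [subst]
    rw [rename_abs, hu]
    congr 2; funext i
    cases i with
    | zero => rfl
    | succ j =>
      simp only [liftSub]
      rw [rename_eq_subst _ (up ρ), subst_rename, rename_eq_subst _ (· + 1), subst_rename]
      rfl

theorem subst_subst (t : Lam) : ∀ σ σ', (t.subst σ).subst σ' = t.subst (fun i => (σ i).subst σ') := by
  induction t with
  | var i => intro ρ σ; rfl
  | app u v hu hv => intro ρ σ; simp [subst, hu, hv]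
  | abs u hu =>
    intro σ σ'
    simp only [subst, hu]
    congr 2; funext i
    cases i with
    | zero => rfl
    | succ j =>
      simp only [liftSub]
      rw [subst_rename, rename_subst]
      rfl

theorem liftSub_var : liftSub var = var := by
  funext i; cases i <;> rfl

theorem subst_var (t : Lam) : t.subst var = t := by
  induction t with
  | var i => rfl
  | app u v hu hv => simp [subst, hu, hv]
  | abs u hu => simp [subst, liftSub_var, hu]

theorem subst_lift_cons (u a : Lam) (σ : ℕ → Lam) :
    (u.subst (liftSub σ)).subst0 a = u.subst (consE a σ) := by
  rw [subst0_eq, subst_subst]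
  congr 1; funext i
  cases i with
  | zero => rfl
  | succ j =>
    simp only [liftSub, consE]
    rw [subst_rename]; exact subst_var _

theorem subst0_subst (u v : Lam) (σ : ℕ → Lam) :
    (u.subst0 v).subst σ = (u.subst (liftSub σ)).subst0 (v.subst σ) := by
  rw [subst_lift_cons, subst0_eq, subst_subst]
  congr 1; funext i; cases i <;> rfl

/- closedness -/

theorem subst_congr_closed (t : Lam) : ∀ k (σ σ' : ℕ → Lam), ClosedUnder k t →
    (∀ i < k, σ i = σ' i) → t.subst σ = t.subst σ' := by
  induction t with
  | var i => intro k σ σ' h hs; exact hs i h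
  | app u v hu hv =>
    intro k σ σ' h hs
    simp only [subst]; rw [hu k σ σ' h.1 hs, hv k σ σ' h.2 hs]
  | abs u hu =>
    intro k σ σ' h hs
    simp only [subst]
    rw [hu (k+1) (liftSub σ) (liftSub σ') h]
    intro i hi
    cases i with
    | zero => rfl
    | succ j => simp only [liftSub]; rw [hs j (by omega)]

theorem closed_mono (t : Lam) : ∀ k l, k ≤ l → ClosedUnder k t → ClosedUnder l t := by
  induction t with
  | var i => intro k l h hc; exact lt_of_lt_of_le hc h
  | app u v hu hv => intro k l h hc; exact ⟨hu k l h hc.1, hv k l h hc.2⟩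
  | abs u hu => intro k l h hc; exact hu (k+1) (l+1) (by omega) hc

theorem closed_rename (t : Lam) : ∀ k l (ρ : ℕ → ℕ), ClosedUnder k t → (∀ i < k, ρ i < l) →
    ClosedUnder l (t.rename ρ) := by
  induction t with
  | var i => intro k l ρ h hs; exact hs i h
  | app u v hu hv => intro k l ρ h hs; exact ⟨hu k l ρ h.1 hs, hv k l ρ h.2 hs⟩
  | abs u hu =>
    intro k l ρ h hs
    rw [rename_abs]
    refine hu (k+1) (l+1) (up ρ) h ?_
    intro i hi
    cases i with
    | zero => simp [up]
    | succ j => have := hs j (by omega); simp only [up]; omega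

theorem closed_subst (t : Lam) : ∀ k l (σ : ℕ → Lam), ClosedUnder k t →
    (∀ i < k, ClosedUnder l (σ i)) → ClosedUnder l (t.subst σ) := by
  induction t with
  | var i => intro k l σ h hs; exact hs i h
  | app u v hu hv => intro k l σ h hs; exact ⟨hu k l σ h.1 hs, hv k l σ h.2 hs⟩
  | abs u hu =>
    intro k l σ h hs
    refine hu (k+1) (l+1) (liftSub σ) h ?_
    intro i hi
    cases i with
    | zero => exact Nat.succ_pos l
    | succ j =>
      exact closed_rename _ l (l+1) _ (hs j (by omega)) (fun i hi => by omega)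

theorem closed_subst0 {k : ℕ} {u v : Lam} (hu : ClosedUnder (k+1) u) (hv : ClosedUnder k v) :
    ClosedUnder k (u.subst0 v) := by
  rw [subst0_eq]
  refine closed_subst u (k+1) k _ hu ?_
  intro i hi
  cases i with
  | zero => exact hv
  | succ j => exact Nat.lt_of_succ_lt_succ hi

theorem exists_closedUnder (t : Lam) : ∃ k, ClosedUnder k t := by
  induction t with
  | var i => exact ⟨i+1, Nat.lt_succ_self i⟩
  | app u v hu hv =>
    obtain ⟨k, hk⟩ := hu
    obtain ⟨l, hl⟩ := hv
    exact ⟨max k l, closed_mono u _ _ (le_max_left _ _) hk, closed_mono v _ _ (le_max_right _ _) hl⟩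
  | abs u hu =>
    obtain ⟨k, hk⟩ := hu
    exact ⟨k, closed_mono u _ _ (Nat.le_succ k) hk⟩

/- weak head reduction -/

inductive WStep : Lam → Lam → Prop
  | beta (u v) : WStep (app (abs u) v) (u.subst0 v)
  | appL {u u'} (v) : WStep u u' → WStep (app u v) (app u' v)

abbrev WRed := ReflTransGen WStep

theorem WStep.headStep {t t' : Lam} (h : WStep t t') : HeadStep t t' := by
  induction h with
  | beta u v => exact .beta u v
  | appL v h ih =>
    refine .appL v ?_ ih
    cases h <;> simp [IsAbs]

theorem WRed.headRed {t t' : Lam} (h : WRed t t') : HeadRed t t' := by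
  induction h using ReflTransGen.head_induction_on with
  | refl => exact ⟨0, .refl _⟩
  | head h _ ih =>
    obtain ⟨n, hn⟩ := ih
    exact ⟨n+1, .step h.headStep hn⟩

theorem WStep.beta' {t t' : Lam} (h : WStep t t') : Beta t t' := by
  induction h with
  | beta u v => exact .beta u v
  | appL v h ih => exact .appL v ih

theorem WStep.subst {t t' : Lam} (h : WStep t t') (σ : ℕ → Lam) :
    WStep (t.subst σ) (t'.subst σ) := by
  induction h with
  | beta u v => rw [subst0_subst]; exact .beta _ _
  | appL v h ih => exact .appL _ ih

theorem WRed.subst {t t' : Lam} (h : WRed t t') (σ : ℕ → Lam) :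
    WRed (t.subst σ) (t'.subst σ) := rtgLift (Lam.subst σ) (fun _ _ h => h.subst σ) h

theorem WRed.appL {t t' : Lam} (h : WRed t t') (v : Lam) : WRed (app t v) (app t' v) :=
  rtgLift (fun t => app t v) (fun _ _ h => .appL v h) h

theorem WStep.closed {t t' : Lam} (h : WStep t t') {k : ℕ} (hc : ClosedUnder k t) :
    ClosedUnder k t' := by
  induction h with
  | beta u v => exact closed_subst0 hc.1 hc.2
  | appL v h ih => exact ⟨ih hc.1, hc.2⟩

theorem WRed.closed {t t' : Lam} (h : WRed t t') {k : ℕ} (hc : ClosedUnder k t) :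
    ClosedUnder k t' := by
  induction h with
  | refl => exact hc
  | tail _ h ih => exact h.closed ih

theorem BetaEq.refl (t : Lam) : BetaEq t t := EqvGen.refl t
theorem BetaEq.symm {t u : Lam} (h : BetaEq t u) : BetaEq u t := EqvGen.symm _ _ h
theorem BetaEq.trans {t u v : Lam} (h : BetaEq t u) (h' : BetaEq u v) : BetaEq t v :=
  EqvGen.trans _ _ _ h h'

theorem BetaEq.lift {f : Lam → Lam} (hf : ∀ t u, Beta t u → Beta (f t) (f u)) {t u : Lam}
    (h : BetaEq t u) : BetaEq (f t) (f u) := by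
  induction h with
  | rel _ _ h => exact .rel _ _ (hf _ _ h)
  | refl _ => exact .refl _
  | symm _ _ _ ih => exact ih.symm
  | trans _ _ _ _ _ ih1 ih2 => exact ih1.trans ih2

theorem WRed.betaEq {t t' : Lam} (h : WRed t t') : BetaEq t t' := by
  induction h with
  | refl => exact .refl _
  | tail _ h ih => exact ih.trans (.rel _ _ h.beta')

theorem Beta.subst {t t' : Lam} (h : Beta t t') : ∀ σ, Beta (t.subst σ) (t'.subst σ) := by
  induction h with
  | beta u v => intro σ; rw [subst0_subst]; exact .beta _ _
  | appL v h ih => intro σ; exact .appL _ (ih σ)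
  | appR v h ih => intro σ; exact .appR _ (ih σ)
  | abs h ih => intro σ; exact .abs (ih _)

theorem BetaEq.subst {t t' : Lam} (h : BetaEq t t') (σ : ℕ → Lam) :
    BetaEq (t.subst σ) (t'.subst σ) := h.lift (f := Lam.subst σ) (fun _ _ h => h.subst σ)

/- standardization -/

inductive Std : Lam → Lam → Prop
  | var {t i} : WRed t (var i) → Std t (var i)
  | app {t u v u' v'} : WRed t (app u v) → Std u u' → Std v v' → Std t (app u' v')
  | abs {t u u'} : WRed t (abs u) → Std u u' → Std t (abs u')

theorem Std.refl (t : Lam) : Std t t := by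
  induction t with
  | var i => exact .var .refl
  | app u v hu hv => exact .app .refl hu hv
  | abs u hu => exact .abs .refl hu

theorem Std.wred {t u v : Lam} (h : WRed t u) (h' : Std u v) : Std t v := by
  cases h' with
  | var h1 => exact .var (h.trans h1)
  | app h1 h2 h3 => exact .app (h.trans h1) h2 h3
  | abs h1 h2 => exact .abs (h.trans h1) h2

theorem WRed.rename {t t' : Lam} (h : WRed t t') (ρ : ℕ → ℕ) :
    WRed (t.rename ρ) (t'.rename ρ) := by
  rw [rename_eq_subst, rename_eq_subst]; exact h.subst _

theorem Std.rename {t t' : Lam} (h : Std t t') : ∀ ρ, Std (t.rename ρ) (t'.rename ρ) := by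
  induction h with
  | var h => intro ρ; exact .var (h.rename ρ)
  | app h _ _ ih1 ih2 => intro ρ; exact .app (h.rename ρ) (ih1 ρ) (ih2 ρ)
  | abs h _ ih => intro ρ; exact .abs (h.rename ρ) (ih _)

theorem Std.subst {t t' : Lam} (h : Std t t') : ∀ σ σ' : ℕ → Lam, (∀ i, Std (σ i) (σ' i)) →
    Std (t.subst σ) (t'.subst σ') := by
  induction h with
  | var h => intro σ σ' hs; exact Std.wred (h.subst σ) (hs _)
  | app h _ _ ih1 ih2 => intro σ σ' hs; exact .app (h.subst σ) (ih1 σ σ' hs) (ih2 σ σ' hs)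
  | abs h _ ih =>
    intro σ σ' hs
    refine .abs (h.subst σ) (ih _ _ ?_)
    intro i
    cases i with
    | zero => exact Std.refl _
    | succ j => exact (hs j).rename _

theorem Std.subst0 {u u' v v' : Lam} (hu : Std u u') (hv : Std v v') :
    Std (u.subst0 v) (u'.subst0 v') := by
  rw [subst0_eq, subst0_eq]
  refine hu.subst _ _ ?_
  intro i
  cases i with
  | zero => exact hv
  | succ j => exact Std.refl _

theorem Std.beta {t' t'' : Lam} (hb : Beta t' t'') : ∀ t, Std t t' → Std t t'' := by
  induction hb with
  | beta u v =>
    intro t h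
    cases h with
    | app h1 h2 h3 =>
      cases h2 with
      | abs h4 h5 =>
        exact Std.wred (h1.trans ((h4.appL _).tail (.beta _ _))) (h5.subst0 h3)
  | appL v h ih =>
    intro t h
    cases h with
    | app h1 h2 h3 => exact .app h1 (ih _ h2) h3
  | appR v h ih =>
    intro t h
    cases h with
    | app h1 h2 h3 => exact .app h1 h2 (ih _ h3)
  | abs h ih =>
    intro t h
    cases h with
    | abs h1 h2 => exact .abs h1 (ih _ h2)

theorem Std.of_red {t t' : Lam} (h : ReflTransGen Beta t t') : Std t t' := by
  induction h with
  | refl => exact Std.refl _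
  | tail _ h ih => exact Std.beta h _ ih

/- Church-Rosser -/

inductive Par : Lam → Lam → Prop
  | var (i) : Par (var i) (var i)
  | app {u u' v v'} : Par u u' → Par v v' → Par (app u v) (app u' v')
  | abs {u u'} : Par u u' → Par (abs u) (abs u')
  | beta {u u' v v'} : Par u u' → Par v v' → Par (app (abs u) v) (u'.subst0 v')

theorem Par.refl (t : Lam) : Par t t := by
  induction t with
  | var i => exact .var i
  | app u v hu hv => exact .app hu hv
  | abs u hu => exact .abs hu

theorem Beta.par {t t' : Lam} (h : Beta t t') : Par t t' := by
  induction h with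
  | beta u v => exact .beta (.refl _) (.refl _)
  | appL v h ih => exact .app ih (.refl _)
  | appR v h ih => exact .app (.refl _) ih
  | abs h ih => exact .abs ih

theorem Par.red {t t' : Lam} (h : Par t t') : ReflTransGen Beta t t' := by
  have hA : ∀ {u u' v v'}, ReflTransGen Beta u u' → ReflTransGen Beta v v' →
      ReflTransGen Beta (Lam.app u v) (Lam.app u' v') := fun {u u' v v'} h1 h2 =>
    (rtgLift (fun t => Lam.app t v) (fun _ _ h => Beta.appL v h) h1).trans
      (rtgLift (fun t => Lam.app u' t) (fun _ _ h => Beta.appR u' h) h2)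
  have hL : ∀ {u u'}, ReflTransGen Beta u u' →
      ReflTransGen Beta (Lam.abs u) (Lam.abs u') := fun h1 =>
    rtgLift Lam.abs (fun _ _ h => Beta.abs h) h1
  induction h with
  | var i => exact .refl
  | app _ _ h1 h2 => exact hA h1 h2
  | abs _ h => exact hL h
  | beta _ _ h1 h2 => exact (hA (hL h1) h2).tail (.beta _ _)

theorem Par.rename {t t' : Lam} (h : Par t t') : ∀ ρ, Par (t.rename ρ) (t'.rename ρ) := by
  induction h with
  | var i => intro ρ; exact .var _
  | app _ _ h1 h2 => intro ρ; exact .app (h1 ρ) (h2 ρ)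
  | abs _ h => intro ρ; exact .abs (h _)
  | @beta u u' v v' _ _ h1 h2 =>
    intro ρ
    have e : (u'.subst0 v').rename ρ = (u'.rename (up ρ)).subst0 (v'.rename ρ) := by
      rw [subst0_eq, subst0_eq, rename_subst, subst_rename]
      congr 1; funext i; cases i <;> rfl
    rw [e]
    exact .beta (h1 _) (h2 _)

theorem Par.liftSub {σ σ' : ℕ → Lam} (hs : ∀ i, Par (σ i) (σ' i)) :
    ∀ i, Par (liftSub σ i) (liftSub σ' i) := by
  intro i
  cases i with
  | zero => exact .refl _
  | succ j => exact (hs j).rename _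

theorem Par.subst {t t' : Lam} (h : Par t t') : ∀ σ σ' : ℕ → Lam, (∀ i, Par (σ i) (σ' i)) →
    Par (t.subst σ) (t'.subst σ') := by
  induction h with
  | var i => intro σ σ' hs; exact hs i
  | app _ _ h1 h2 => intro σ σ' hs; exact .app (h1 _ _ hs) (h2 _ _ hs)
  | abs _ h => intro σ σ' hs; exact .abs (h _ _ (Par.liftSub hs))
  | beta _ _ h1 h2 =>
    intro σ σ' hs
    rw [subst0_subst]
    exact .beta (h1 _ _ (Par.liftSub hs)) (h2 _ _ hs)

theorem Par.subst0 {u u' v v' : Lam} (hu : Par u u') (hv : Par v v') :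
    Par (u.subst0 v) (u'.subst0 v') := by
  rw [subst0_eq, subst0_eq]
  refine hu.subst _ _ ?_
  intro i
  cases i with
  | zero => exact hv
  | succ j => exact Par.refl _

def dev : Lam → Lam
  | var i => var i
  | abs u => abs (dev u)
  | app (abs u) v => (dev u).subst0 (dev v)
  | app (var i) v => app (var i) (dev v)
  | app (app a b) v => app (dev (app a b)) (dev v)

theorem Par.dev {t t' : Lam} (h : Par t t') : Par t' t.dev := by
  induction h with
  | var i => exact .var i
  | @app u u' v v' hu hv h1 h2 =>
    cases u with
    | var i => simp only [Lam.dev] at *; exact .app h1 h2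
    | app a b => rw [Lam.dev]; exact .app h1 h2
    | abs u =>
      simp only [Lam.dev] at *
      cases hu with
      | abs hu =>
        cases h1 with
        | abs h1 => exact .beta h1 h2
  | abs _ h => exact .abs h
  | beta _ _ h1 h2 => simp only [Lam.dev]; exact h1.subst0 h2

theorem BetaEq.join {t u : Lam} (h : BetaEq t u) : Join (ReflTransGen Par) t u := by
  have heq : Equivalence (Join (ReflTransGen Par)) :=
    equivalence_join_reflTransGen (fun a b c hb hc =>
      ⟨a.dev, .single hb.dev, .single hc.dev⟩)
  induction h with
  | rel x y h => exact ⟨y, .single h.par, .refl⟩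
  | refl _ => exact heq.refl _
  | symm _ _ _ ih => exact heq.symm ih
  | trans _ _ _ _ _ ih1 ih2 => exact heq.trans ih1 ih2

theorem par_iter (i j n : ℕ) : ∀ d, Par (iterApp (var i) n (var j)) d →
    d = iterApp (var i) n (var j) := by
  induction n with
  | zero => intro d h; cases h; rfl
  | succ n ih =>
    intro d h
    cases h with
    | app h1 h2 => cases h1; rw [ih _ h2]; rfl

theorem par_church (n : ℕ) (d : Lam) (h : Par (church n) d) : d = church n := by
  cases h with
  | abs h => cases h with
    | abs h => rw [par_iter _ _ _ _ h]; rfl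

theorem betaEq_church_red {θ : Lam} {n : ℕ} (h : BetaEq θ (church n)) :
    ReflTransGen Beta θ (church n) := by
  obtain ⟨d, h1, h2⟩ := h.join
  have : d = church n := by
    clear h1
    generalize hc : church n = c at h2
    induction h2 with
    | refl => rfl
    | tail _ h ih => subst ih; subst hc; exact par_church n _ h
  subst this
  clear h2 h
  generalize church n = c at h1
  induction h1 with
  | refl => exact .refl
  | tail _ h ih => exact ih.trans h.red

theorem std_iter_seq (n : ℕ) : ∀ tn, Std tn (iterApp (var 0) n (var 1)) →
    ∃ t : ℕ → Lam, t n = tn ∧ WRed (t 0) (var 1) ∧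
      ∀ m < n, WRed (t (m+1)) (app (var 0) (t m)) := by
  induction n with
  | zero =>
    intro tn h
    cases h with
    | var h => exact ⟨fun _ => tn, rfl, h, fun m hm => absurd hm (Nat.not_lt_zero m)⟩
  | succ n ih =>
    intro tn h
    cases h with
    | app h1 h2 h3 =>
      cases h2 with
      | var h4 =>
        obtain ⟨t, e, h0, hs⟩ := ih _ h3
        refine ⟨Function.update t (n+1) tn, by simp, ?_, ?_⟩
        · rw [Function.update_of_ne (by omega)]; exact h0
        · intro m hm
          rcases Nat.lt_succ_iff_lt_or_eq.mp hm with hm | rfl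
          · rw [Function.update_of_ne (by omega), Function.update_of_ne (by omega)]
            exact hs m hm
          · rw [Function.update_self, Function.update_of_ne (by omega), e]
            exact h1.trans (h4.appL _)

/-- Everything we need from `θ ≃β n`. -/
theorem church_seq {θ : Lam} {n : ℕ} (h : BetaEq θ (church n)) :
    ∃ t : ℕ → Lam, (∀ a b, WRed (app (app θ a) b) ((t n).subst (consE b (consE a var)))) ∧
      WRed (t 0) (var 1) ∧ ∀ m < n, WRed (t (m+1)) (app (var 0) (t m)) := by
  have hs := Std.of_red (betaEq_church_red h)
  cases hs with
  | abs h1 h2 =>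
    rename_i u
    cases h2 with
    | abs h3 h4 =>
      rename_i u2
      obtain ⟨t, e, h0, h5⟩ := std_iter_seq n _ h4
      refine ⟨t, ?_, h0, h5⟩
      intro a b
      have s1 : WRed (app θ a) (u.subst0 a) := (h1.appL a).tail (.beta _ _)
      have s2 : WRed (u.subst0 a) (abs (u2.subst (liftSub (consE a var)))) := by
        rw [subst0_eq]; exact h3.subst _
      have s3 := (WRed.appL (s1.trans s2) b).tail (.beta _ _)
      rw [subst_lift_cons] at s3
      rw [e]; exact s3

/- coding -/

def code : Lam → ℕ
  | var i => Nat.pair 0 i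
  | app u v => Nat.pair 1 (Nat.pair u.code v.code)
  | abs u => Nat.pair 2 u.code

theorem code_inj (t : Lam) : ∀ t', t.code = t'.code → t = t' := by
  induction t with
  | var i => intro t' h; cases t' <;> simp [code] at h ⊢; exact h
  | app u v hu hv =>
    intro t' h
    cases t' <;> simp [code] at h ⊢
    exact ⟨hu _ h.1, hv _ h.2⟩
  | abs u hu => intro t' h; cases t' <;> simp [code] at h ⊢; exact hu _ h

theorem code_closed (t : Lam) : ClosedUnder (t.code + 1) t := by
  induction t with
  | var i => exact Nat.lt_succ_of_le (Nat.right_le_pair 0 i)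
  | app u v hu hv =>
    have h1 := Nat.right_le_pair 1 (Nat.pair u.code v.code)
    have h2 := Nat.right_le_pair u.code v.code
    have h3 := Nat.left_le_pair u.code v.code
    refine ⟨closed_mono _ _ _ ?_ hu, closed_mono _ _ _ ?_ hv⟩ <;> simp only [code] <;> omega
  | abs u hu =>
    have h1 := Nat.right_le_pair 2 u.code
    exact closed_mono _ _ _ (by simp only [code]; omega) hu

def K (m : ℕ) (a b : Lam) : ℕ := Nat.pair m (Nat.pair a.code b.code) + 2

theorem K_inj {m m' : ℕ} {a a' b b' : Lam} (h : K m a b = K m' a' b') :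
    m = m' ∧ a = a' ∧ b = b' := by
  simp [K] at h
  exact ⟨h.1, code_inj _ _ h.2.1, code_inj _ _ h.2.2⟩

theorem K_closed (m : ℕ) (a b : Lam) : ClosedUnder (K m a b) a ∧ ClosedUnder (K m a b) b := by
  have h1 := Nat.right_le_pair m (Nat.pair a.code b.code)
  have h2 := Nat.right_le_pair a.code b.code
  have h3 := Nat.left_le_pair a.code b.code
  exact ⟨closed_mono _ _ _ (by unfold K; omega) (code_closed a),
    closed_mono _ _ _ (by unfold K; omega) (code_closed b)⟩

open Classical in
noncomputable def sig (θ : Lam) (t : ℕ → Lam) (i : ℕ) : Lam :=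
  if i = 0 then var 0 else if i = 1 then θ else
    if h : ∃ p : ℕ × Lam × Lam, i = K p.1 p.2.1 p.2.2 then
      let p := Classical.choose h
      let s : ℕ → Lam := fun j => if _hj : j < i then sig θ t j else var 0
      (t p.1).subst (consE (p.2.2.subst s) (consE (p.2.1.subst s) var))
    else var 0
termination_by i

theorem sig_zero (θ t) : sig θ t 0 = var 0 := by rw [sig]; simp
theorem sig_one (θ t) : sig θ t 1 = θ := by rw [sig]; simp
theorem sig_K (θ t m a b) : sig θ t (K m a b) =
    (t m).subst (consE (b.subst (sig θ t)) (consE (a.subst (sig θ t)) var)) := by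
  have h : ∃ p : ℕ × Lam × Lam, K m a b = K p.1 p.2.1 p.2.2 := ⟨(m, a, b), rfl⟩
  rw [sig, if_neg (by unfold K; omega), if_neg (by unfold K; omega), dif_pos h]
  have hp : Classical.choose h = (m, a, b) := by
    obtain ⟨e1, e2, e3⟩ := K_inj (Classical.choose_spec h)
    ext1
    · exact e1.symm
    · ext1
      · exact e2.symm
      · exact e3.symm
  simp only [hp]
  rw [subst_congr_closed b (K m a b) _ (sig θ t) (K_closed m a b).2,
    subst_congr_closed a (K m a b) _ (sig θ t) (K_closed m a b).1]
  · intro i hi; rw [dif_pos hi]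
  · intro i hi; rw [dif_pos hi]

/- the machine -/

inductive MStep (n : ℕ) : Lam → Lam → Prop
  | w {s s'} : WStep s s' → MStep n s s'
  | nu (a b c) : MStep n (app (app (app (var 1) a) b) c) (app (var (K n a b)) c)
  | zero (a b c) : MStep n (app (var (K 0 a b)) c) (app a c)
  | succ (m a b c) : m < n → MStep n (app (var (K (m+1) a b)) c) (app (app b (var (K m a b))) c)

theorem MStep.sim {n : ℕ} {θ : Lam} {t : ℕ → Lam}
    (ht : ∀ a b, WRed (app (app θ a) b) ((t n).subst (consE b (consE a var))))
    (h0 : WRed (t 0) (var 1)) (hs : ∀ m < n, WRed (t (m+1)) (app (var 0) (t m)))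
    {s s' : Lam} (h : MStep n s s') : WRed (s.subst (sig θ t)) (s'.subst (sig θ t)) := by
  cases h with
  | w h => exact .single (h.subst _)
  | nu a b c =>
    simp only [subst, sig_one, sig_K]
    exact (ht _ _).appL _
  | zero a b c =>
    simp only [subst, sig_K]
    exact (h0.subst _).appL _
  | succ m a b c hm =>
    simp only [subst, sig_K]
    exact ((hs m hm).subst _).appL _

end Lam

/- Realizability -/
open Lam

def SatSet : Type := {S : Set Lam // ∀ t t', WStep t t' → t' ∈ S → t ∈ S}

def evalT (ρ : ℕ → ℕ) : FOTerm NatSig → ℕ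
  | .var i => ρ i
  | .fn NatFn.zero _ => 0
  | .fn NatFn.succ ts => evalT ρ (ts (0 : Fin 1)) + 1

theorem evalT_subst (ρ : ℕ → ℕ) (σ : ℕ → FOTerm NatSig) (t : FOTerm NatSig) :
    evalT ρ (t.subst σ) = evalT (fun i => evalT ρ (σ i)) t := by
  induction t with
  | var i => rfl
  | fn f ts ih =>
    cases f with
    | zero => rfl
    | succ => exact congrArg (· + 1) (ih (0 : Fin 1))

theorem evalT_rename (ρ : ℕ → ℕ) (r : ℕ → ℕ) (t : FOTerm NatSig) :
    evalT ρ (t.rename r) = evalT (fun i => ρ (r i)) t := by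
  induction t with
  | var i => rfl
  | fn f ts ih =>
    cases f with
    | zero => rfl
    | succ => exact congrArg (· + 1) (ih (0 : Fin 1))

def interp (B : SatSet) : (ℕ → ℕ) → (ℕ → List ℕ → SatSet) → Form NatSig → Set Lam
  | _, _, .bot => B.1
  | _, _, .pr P _ => nomatch P
  | ρ, η, .pvar X ts => (η X (ts.map (evalT ρ))).1
  | ρ, η, .arr A C => {t | ∀ a ∈ interp B ρ η A, app t a ∈ interp B ρ η C}
  | ρ, η, .fall A => {t | ∀ k, t ∈ interp B (consE k ρ) η A}
  | ρ, η, .pall A => {t | ∀ P, t ∈ interp B ρ (consE P η) A}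

theorem interp_sat (B : SatSet) (A : Form NatSig) : ∀ ρ η t t', WStep t t' →
    t' ∈ interp B ρ η A → t ∈ interp B ρ η A := by
  induction A with
  | bot => intro ρ η; exact B.2
  | pr P => exact nomatch P
  | pvar X ts => intro ρ η; exact (η X _).2
  | arr A C _ ih => intro ρ η t t' h h' a ha; exact ih _ _ _ _ (.appL a h) (h' a ha)
  | fall A ih => intro ρ η t t' h h' k; exact ih _ _ _ _ h (h' k)
  | pall A ih => intro ρ η t t' h h' k; exact ih _ _ _ _ h (h' k)

theorem interp_substFO (B : SatSet) (A : Form NatSig) : ∀ ρ η σ,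
    interp B ρ η (A.substFO σ) = interp B (fun i => evalT ρ (σ i)) η A := by
  induction A with
  | bot => intro ρ η σ; rfl
  | pr P => exact nomatch P
  | pvar X ts =>
    intro ρ η σ
    simp only [Form.substFO, interp, List.map_map]
    congr 2
    apply List.map_congr_left
    intro t _
    exact evalT_subst _ _ _
  | arr A C h1 h2 => intro ρ η σ; simp only [Form.substFO, interp, h1, h2]
  | fall A ih =>
    intro ρ η σ
    simp only [Form.substFO, interp, ih]
    have e : ∀ k, (fun i => evalT (consE k ρ) (FOTerm.liftSub σ i)) =
        consE k (fun i => evalT ρ (σ i)) := by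
      intro k; funext i
      cases i with
      | zero => rfl
      | succ j => simp only [FOTerm.liftSub, evalT_rename]; rfl
    simp only [e]
  | pall A ih => intro ρ η σ; simp only [Form.substFO, interp, ih]

theorem interp_rename2 (B : SatSet) (A : Form NatSig) : ∀ ρ η r,
    interp B ρ η (A.rename2 r) = interp B ρ (fun i => η (r i)) A := by
  induction A with
  | bot => intro ρ η r; rfl
  | pr P => exact nomatch P
  | pvar X ts => intro ρ η r; rfl
  | arr A C h1 h2 => intro ρ η r; simp only [Form.rename2, interp, h1, h2]
  | fall A ih => intro ρ η r; simp only [Form.rename2, interp, ih]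
  | pall A ih =>
    intro ρ η r
    simp only [Form.rename2, interp, ih]
    ext t
    refine forall_congr' fun P => ?_
    have : ∀ η1 η2 : ℕ → List ℕ → SatSet, η1 = η2 →
      (t ∈ interp B ρ η1 A ↔ t ∈ interp B ρ η2 A) := by rintro _ _ rfl; rfl
    apply this
    funext i; cases i <;> rfl

def gInt (B : SatSet) (G : Form NatSig) (ρ : ℕ → ℕ) (η : ℕ → List ℕ → SatSet) (d : ℕ)
    (args : List ℕ) : SatSet :=
  ⟨interp B (fun i => if h : i < args.length then args.get ⟨i, h⟩ else ρ (i - args.length + d)) η G,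
    interp_sat B G _ _⟩

def insE (B : SatSet) (G : Form NatSig) (d e : ℕ) (ρ : ℕ → ℕ) (η : ℕ → List ℕ → SatSet) :
    ℕ → List ℕ → SatSet := fun X =>
  if X = e then gInt B G ρ (fun Y => η (Y + e)) d
  else if e < X then η (X - 1) else η X

theorem interp_inst2 (B : SatSet) (G A : Form NatSig) : ∀ d e ρ η,
    interp B ρ η (Form.inst2 G d e A) = interp B ρ (insE B G d e ρ η) A := by
  induction A with
  | bot => intro d e ρ η; rfl
  | pr P => exact nomatch P
  | pvar X ts =>
    intro d e ρ η
    simp only [Form.inst2, interp, insE]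
    split_ifs with h h'
    · rw [interp_substFO, interp_rename2]
      simp only [gInt, List.length_map]
      congr 1
      funext i
      split_ifs with h1
      · simp
      · rfl
    · rfl
    · rfl
  | arr A C h1 h2 => intro d e ρ η; simp only [Form.inst2, interp, h1, h2]
  | fall A ih =>
    intro d e ρ η
    simp only [Form.inst2, interp, ih]
    have : ∀ k, insE B G (d+1) e (consE k ρ) η = insE B G d e ρ η := by
      intro k; rfl
    simp only [this]
  | pall A ih =>
    intro d e ρ η
    simp only [Form.inst2, interp, ih]
    have : ∀ P, insE B G d (e+1) ρ (consE P η) = consE P (insE B G d e ρ η) := by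
      intro P; funext X
      cases X with
      | zero => simp [insE, consE]
      | succ X =>
        by_cases h : X = e
        · subst h; simp [insE, consE]
        · by_cases h' : e < X
          · obtain ⟨Y, rfl⟩ : ∃ Y, X = Y + 1 := ⟨X - 1, by omega⟩
            simp [insE, consE, h, h']
            intro h1; omega
          · simp [insE, consE, h, h']
    simp only [this]

theorem subst_numT (ρ : ℕ → ℕ) (t : FOTerm NatSig) :
    t.subst (fun i => numT (ρ i)) = numT (evalT ρ t) := by
  induction t with
  | var i => rfl
  | fn f ts ih =>
    cases f with
    | zero =>
      simp only [FOTerm.subst, evalT, numT, zeroT]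
      congr 1; funext i; exact i.elim0
    | succ =>
      simp only [FOTerm.subst, evalT, numT, succT]
      congr 1; funext i
      have : i = (0 : Fin 1) := Subsingleton.elim (α := Fin 1) _ _
      subst this
      exact ih (0 : Fin 1)

theorem FOsubst_subst (t : FOTerm NatSig) (σ σ' : ℕ → FOTerm NatSig) :
    (t.subst σ).subst σ' = t.subst (fun i => (σ i).subst σ') := by
  induction t with
  | var i => rfl
  | fn f ts ih => simp only [FOTerm.subst, ih]

theorem num_eq {E} (hE : Adequate E) : ∀ a b, EqE E (numT a) (numT b) → a = b := by
  intro a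
  induction a with
  | zero =>
    intro b h
    cases b with
    | zero => rfl
    | succ b => exact absurd (EqvGen.symm _ _ h) (hE.1 _)
  | succ a ih =>
    intro b h
    cases b with
    | zero => exact absurd h (hE.1 _)
    | succ b => rw [ih b (hE.2 _ _ h)]

theorem evalT_eqE {E} (hE : Adequate E) {u v : FOTerm NatSig} (h : EqE E u v) (ρ : ℕ → ℕ) :
    evalT ρ u = evalT ρ v := by
  induction h with
  | rel u v h =>
    obtain ⟨p, hp, σ, rfl, rfl⟩ := h
    apply num_eq hE
    rw [← subst_numT, ← subst_numT]
    exact .rel _ _ ⟨p, hp, _, FOsubst_subst _ _ _, FOsubst_subst _ _ _⟩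
  | refl _ => rfl
  | symm _ _ _ ih => exact ih.symm
  | trans _ _ _ _ _ h1 h2 => exact h1.trans h2

theorem interp_substFO0 (B : SatSet) (A : Form NatSig) (ρ η u) :
    interp B ρ η (A.substFO0 u) = interp B (consE (evalT ρ u) ρ) η A := by
  unfold Form.substFO0
  rw [interp_substFO]
  congr 1; funext i; cases i <;> rfl

theorem adequacy {E} (hE : Adequate E) (B : SatSet) {Γ t A} (h : AF2 NatSig E Γ t A) :
    ∀ ρ η (σ : ℕ → Lam), (∀ i C, Γ[i]? = some C → σ i ∈ interp B ρ η C) →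
      t.subst σ ∈ interp B ρ η A := by
  induction h with
  | var h => intro ρ η σ hs; exact hs _ _ h
  | absI h ih =>
    intro ρ η σ hs a ha
    refine interp_sat B _ _ _ _ _ (.beta _ _) ?_
    rw [subst_lift_cons]
    apply ih
    intro i C hi
    cases i with
    | zero => simp at hi; subst hi; exact ha
    | succ j => exact hs j C (by simpa using hi)
  | appE _ _ h1 h2 => intro ρ η σ hs; exact h1 ρ η σ hs _ (h2 ρ η σ hs)
  | fallI _ ih =>
    intro ρ η σ hs k
    apply ih
    intro i C hi
    simp only [List.getElem?_map, Option.map_eq_some_iff] at hi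
    obtain ⟨D, hD, rfl⟩ := hi
    unfold Form.shiftFO
    rw [interp_substFO]
    exact hs i D hD
  | fallE u _ ih => intro ρ η σ hs; rw [interp_substFO0]; exact ih ρ η σ hs _
  | pallI _ ih =>
    intro ρ η σ hs P
    apply ih
    intro i C hi
    simp only [List.getElem?_map, Option.map_eq_some_iff] at hi
    obtain ⟨D, hD, rfl⟩ := hi
    rw [interp_rename2]
    exact hs i D hD
  | pallE G _ ih =>
    intro ρ η σ hs
    unfold Form.inst2_0
    rw [interp_inst2]
    have := ih ρ η σ hs (gInt B G ρ η 0)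
    convert this using 1
    congr 1
    funext X
    cases X with
    | zero => simp [insE, consE]
    | succ X => simp [insE, consE]
  | eqE _ he ih =>
    intro ρ η σ hs
    have := ih ρ η σ hs
    rw [interp_substFO0] at this ⊢
    rwa [← evalT_eqE hE he]

theorem AF2.closedUnder {E Γ t A} (h : AF2 NatSig E Γ t A) : ClosedUnder Γ.length t := by
  induction h with
  | var h => exact (List.getElem?_eq_some_iff.mp h).1
  | absI h ih => simpa [ClosedUnder] using ih
  | appE _ _ h1 h2 => exact ⟨h1, h2⟩
  | fallI _ ih => simpa using ih
  | fallE _ _ ih => exact ih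
  | pallI _ ih => simpa using ih
  | pallE _ _ ih => exact ih
  | eqE _ _ ih => exact ih

/- From `τ x f ≃ (f)ⁿ x` with fresh variables to `τ ≃ n`. -/

theorem WRed.app_cases {u v r : Lam} (h : WRed (app u v) r) :
    (∃ u', WRed u u' ∧ r = app u' v) ∨ (∃ w, WRed u (abs w) ∧ WRed (w.subst0 v) r) := by
  induction h with
  | refl => exact .inl ⟨u, .refl, rfl⟩
  | tail _ h ih =>
    rcases ih with ⟨u', h1, rfl⟩ | ⟨w, h1, h2⟩
    · cases h with
      | beta w v => exact .inr ⟨w, h1, .refl⟩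
      | appL v h => exact .inl ⟨_, h1.tail h, rfl⟩
    · exact .inr ⟨w, h1, h2.tail h⟩

theorem subst_iterApp (σ : ℕ → Lam) (f x : Lam) (n : ℕ) :
    (iterApp f n x).subst σ = iterApp (f.subst σ) n (x.subst σ) := by
  induction n with
  | zero => rfl
  | succ n ih => simp only [iterApp, subst, ih]

theorem church_of_fresh {τ : Lam} {N n : ℕ} (hc : ClosedUnder N τ)
    (h : Std (app (app τ (var N)) (var (N+1))) (iterApp (var (N+1)) n (var N)))
    (hb : BetaEq (app (app τ (var N)) (var (N+1))) (iterApp (var (N+1)) n (var N))) :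
    BetaEq τ (church n) := by
  have hcx : ClosedUnder (N+1) (app τ (var N)) :=
    ⟨closed_mono _ _ _ (Nat.le_succ N) hc, Nat.lt_succ_self N⟩
  -- `τ x` reduces to an abstraction
  have key1 : ∃ w, WRed (app τ (var N)) (abs w) := by
    cases n with
    | zero =>
      cases h with
      | var h =>
        rcases WRed.app_cases h with ⟨u', _, h2⟩ | ⟨w, h1, _⟩
        · cases h2
        · exact ⟨w, h1⟩
    | succ n =>
      cases h with
      | app h1 h2 h3 =>
        cases h2 with
        | var h2 =>
          rcases WRed.app_cases (h1.trans (h2.appL _)) with ⟨u', h4, h5⟩ | ⟨w, h4, _⟩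
          · cases h5
            have : ClosedUnder (N+1) (var (N+1)) := WRed.closed h4 hcx
            exact absurd this (lt_irrefl _)
          · exact ⟨w, h4⟩
  obtain ⟨w, hw⟩ := key1
  obtain ⟨u1, hu1, hu2⟩ : ∃ u1, WRed τ (abs u1) ∧ WRed (u1.subst0 (var N)) (abs w) := by
    rcases WRed.app_cases hw with ⟨u', _, h2⟩ | h
    · cases h2
    · exact h
  have hcu1 : ClosedUnder (N+1) u1 := WRed.closed (k := N) hu1 hc
  -- rename `N` back
  have hu3 := WRed.subst hu2 (fun i => if i = N then var 0 else var (i+1))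
  have e1 : (u1.subst0 (var N)).subst (fun i => if i = N then var 0 else var (i+1)) = u1 := by
    rw [subst0_eq, subst_subst]
    conv_rhs => rw [← subst_var u1]
    apply subst_congr_closed u1 (N+1) _ _ hcu1
    intro i hi
    cases i with
    | zero => simp [consE, subst]
    | succ j => simp [consE, subst]; omega
  rw [e1] at hu3
  simp only [subst] at hu3
  generalize w.subst _ = u2 at hu3
  have hcu2 : ClosedUnder (N+2) u2 := WRed.closed (k := N+1) hu3 hcu1
  -- `τ ≃ λλ u2`
  have hτ : BetaEq τ (abs (abs u2)) :=
    hu1.betaEq.trans (hu3.betaEq.lift (f := abs) fun _ _ h => .abs h)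
  have hτ2 : BetaEq (app (app τ (var N)) (var (N+1)))
      (app (app (abs (abs u2)) (var N)) (var (N+1))) :=
    hτ.lift (f := fun t => app (app t (var N)) (var (N+1))) fun _ _ h => .appL _ (.appL _ h)
  have hr : WRed (app (app (abs (abs u2)) (var N)) (var (N+1)))
      (u2.subst (consE (var (N+1)) (consE (var N) var))) := by
    have s1 : WRed (app (abs (abs u2)) (var N)) (abs (u2.subst (liftSub (consE (var N) var)))) := by
      have := ReflTransGen.single (WStep.beta (abs u2) (var N))
      rwa [subst0_eq (abs u2)] at this
    have s2 := (WRed.appL s1 (var (N+1))).tail (.beta _ _)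
    rwa [subst_lift_cons] at s2
  have h5 := ((hr.betaEq.symm.trans hτ2.symm).trans hb).subst
    (fun i => if i = N+1 then var 0 else if i = N then var 1 else var (i+2))
  have e2 : (u2.subst (consE (var (N+1)) (consE (var N) var))).subst
      (fun i => if i = N+1 then var 0 else if i = N then var 1 else var (i+2)) = u2 := by
    rw [subst_subst]
    conv_rhs => rw [← subst_var u2]
    apply subst_congr_closed u2 (N+2) _ _ hcu2
    intro i hi
    rcases i with _ | _ | j
    · simp [consE, subst]
    · simp [consE, subst]
    · have h1 : j ≠ N + 1 := by omega
      have h2 : j ≠ N := by omega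
      simp [consE, subst, h1, h2]
  rw [e2, subst_iterApp] at h5
  simp [subst] at h5
  exact hτ.trans (h5.lift (f := fun t => abs (abs t)) fun _ _ h => .abs (.abs h))

/- The pole. -/
def pole (n : ℕ) : SatSet :=
  ⟨{t | ∃ τ, ReflTransGen (MStep n) t (app (var 0) τ) ∧ BetaEq τ (church n)}, by
    rintro t t' h ⟨τ, h1, h2⟩
    exact ⟨τ, h1.head (.w h), h2⟩⟩

theorem pole_exp {n : ℕ} {t t' : Lam} (h : MStep n t t') (h' : t' ∈ (pole n).1) :
    t ∈ (pole n).1 := by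
  obtain ⟨τ, h1, h2⟩ := h'
  exact ⟨τ, h1.head h, h2⟩

def iterSat (N : ℕ) (l : List ℕ) : SatSet :=
  ⟨{t | ReflTransGen Beta t (iterApp (var (N+1)) (l.headD 0) (var N))}, fun _ _ h h' =>
    ReflTransGen.head h.beta' h'⟩

theorem f_real (n : ℕ) (η) (ρ : ℕ → ℕ) (hρ : ρ 0 = n) :
    var 0 ∈ interp (pole n) ρ η (.neg (NForm (FOTerm.var 0))) := by
  intro τ hτ
  refine ⟨τ, .refl, ?_⟩
  obtain ⟨N, hN⟩ := exists_closedUnder τ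
  have h : ReflTransGen Beta (app (app τ (var N)) (var (N+1)))
      (iterApp (var (N+1)) n (var N)) := by
    have := hτ (iterSat N) (var N) ReflTransGen.refl (var (N+1)) ?_
    · rw [← hρ]; exact this
    · intro k a ha
      exact rtgLift (fun t => app (var (N+1)) t) (fun _ _ h => Beta.appR _ h) ha
  refine church_of_fresh hN (Std.of_red h) ?_
  clear hτ
  generalize iterApp (var (N+1)) n (var N) = c at h
  induction h with
  | refl => exact .refl _
  | tail _ h ih => exact ih.trans (.rel _ _ h)

theorem nu_real (n : ℕ) (η) (ρ : ℕ → ℕ) (hρ : ρ 0 = n) :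
    var 1 ∈ interp (pole n) ρ η (NForm (FOTerm.var 0)).godel := by
  intro P a ha b hb c hc
  have hc' : c ∈ (P [n]).1 := by rw [← hρ]; exact hc
  have key : ∀ m ≤ n, ∀ c ∈ (P [m]).1, app (var (K m a b)) c ∈ (pole n).1 := by
    intro m
    induction m with
    | zero =>
      intro _ c hc
      exact pole_exp (.zero a b c) (ha c hc)
    | succ m ih =>
      intro hm c hc
      exact pole_exp (.succ m a b c hm) (hb m (var (K m a b)) (ih (by omega)) c hc)
  exact pole_exp (.nu a b c) (key n le_rfl c hc')

open Lam in
/-- Krivine's storage theorem : every λ-term of type `∀x{N^g[x] → ¬¬N[x]}`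
in AF2 is a storage operator for Church integers. -/
theorem stmt12 (E : Set (FOTerm NatSig × FOTerm NatSig)) (hE : Adequate E)
    (T : Lam) (h : AF2 NatSig E [] T storType) :
    ∀ n : ℕ, IsStorageFor T (church n) := by
  intro n
  have hT : Closed T := h.closedUnder
  refine ⟨hT, ?_⟩
  let η : ℕ → List ℕ → SatSet := fun _ _ => pole n
  have h1 := adequacy hE (pole n) h (fun _ => 0) η var (by simp) n (var 1)
    (nu_real n _ _ rfl) (var 0) (f_real n _ _ rfl)
  rw [subst_var] at h1
  obtain ⟨τ, hr, hτ⟩ := h1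
  refine ⟨τ, hτ, ?_⟩
  intro θ hθ
  obtain ⟨t, ht, h0, hs⟩ := church_seq hθ
  refine ⟨sig θ t, sig_zero θ t, ?_⟩
  have hsim : WRed ((app (app T (var 1)) (var 0)).subst (sig θ t))
      ((app (var 0) τ).subst (sig θ t)) := by
    generalize app (app T (var 1)) (var 0) = s at hr
    generalize app (var 0) τ = s' at hr
    induction hr with
    | refl => exact .refl
    | tail _ h ih => exact ih.trans (h.sim ht h0 hs)
  simp only [subst, sig_zero, sig_one] at hsim
  rw [subst_congr_closed T 0 _ var hT (by simp), subst_var] at hsim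
  exact WRed.headRed hsim
end
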